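/- Let D′ ⋐ D ⊂ ℝ^{2n+1} be bounded open sets, let s ≥ 2n + 3 be an integer, and let C₀ > 0. Then there exists a constant C > 0 such that for every smooth function f : cl(D) → ℝ satisfying f(x) ≥ 1/C₀ for all x ∈ cl(D′), one has ‖1/f‖_{D′,s} ≤ C (1 + ‖f‖_{D,s})^s. -/

import Mathlib

open MeasureTheory Bornology

noncomputable section

variable {E : Type*} [NormedAddCommGroup E] [NormedSpace ℝ E]

/-- The standard contact form `η₀ = dx^{2n+1} - Σ x^{n+j} dx^j` on `ℝ^{2n+1}`
(0-indexed coordinates): `η₀(x)(v) = v_{2n} - Σ_{j<n} x_{n+j} v_j`. -/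
def eta0 (n : ℕ) (x v : Fin (2*n+1) → ℝ) : ℝ :=
  v ⟨2*n, by omega⟩ -
    ∑ j : Fin n, x ⟨n + j, by have := j.2; omega⟩ * v ⟨j, by have := j.2; omega⟩

/-- `dη₀ = Σ_{j<n} dx^j ∧ dx^{n+j}`. -/
def dEta0 (n : ℕ) (u v : Fin (2*n+1) → ℝ) : ℝ :=
  ∑ j : Fin n,
    (u ⟨j, by have := j.2; omega⟩ * v ⟨n + j, by have := j.2; omega⟩ -
     u ⟨n + j, by have := j.2; omega⟩ * v ⟨j, by have := j.2; omega⟩)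

/-- The horizontal vector fields: for `j < n`, `X_j = ∂_j + x_{n+j} ∂_{2n}`;
for `n ≤ j < 2n`, `X_j = ∂_j` (0-indexed). -/
def Xvec (n : ℕ) (j : Fin (2*n)) (x : Fin (2*n+1) → ℝ) : Fin (2*n+1) → ℝ :=
  if h : (j : ℕ) < n then
    (Pi.single (⟨j, by omega⟩ : Fin (2*n+1)) 1 : Fin (2*n+1) → ℝ)
      + x ⟨n + j, by omega⟩ • (Pi.single (⟨2*n, by omega⟩ : Fin (2*n+1)) 1 : Fin (2*n+1) → ℝ)
  else
    (Pi.single (⟨j, by have := j.2; omega⟩ : Fin (2*n+1)) 1 : Fin (2*n+1) → ℝ)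

/-- The horizontal derivative `X_j f`. -/
def hDeriv (n : ℕ) (j : Fin (2*n)) (f : (Fin (2*n+1) → ℝ) → E)
    (x : Fin (2*n+1) → ℝ) : E :=
  fderiv ℝ f x (Xvec n j x)

/-- Iterated horizontal derivative `X_I f = X_{i₁} ⋯ X_{i_t} f`. -/
def XI (n : ℕ) : List (Fin (2*n)) → ((Fin (2*n+1) → ℝ) → E) → ((Fin (2*n+1) → ℝ) → E)
  | [], f => f
  | j :: I, f => hDeriv n j (XI n I f)

/-- Squared Folland–Stein norm `‖f‖_{D,s}² = Σ_{|I| ≤ s} ∫_D ‖X_I f‖²`. -/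
def fsNormSq (n : ℕ) (D : Set (Fin (2*n+1) → ℝ)) (s : ℕ)
    (f : (Fin (2*n+1) → ℝ) → E) : ℝ :=
  ∑ t ∈ Finset.range (s+1), ∑ I : Fin t → Fin (2*n),
    ∫ x in D, ‖XI n (List.ofFn I) f x‖^2

/-- The Folland–Stein norm `‖f‖_{D,s}`. -/
def fsNorm (n : ℕ) (D : Set (Fin (2*n+1) → ℝ)) (s : ℕ)
    (f : (Fin (2*n+1) → ℝ) → E) : ℝ :=
  Real.sqrt (fsNormSq n D s f)

/-- Ordinary partial derivative `∂_i f`. -/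
def pDeriv (n : ℕ) (i : Fin (2*n+1)) (f : (Fin (2*n+1) → ℝ) → E)
    (x : Fin (2*n+1) → ℝ) : E :=
  fderiv ℝ f x (Pi.single i 1 : Fin (2*n+1) → ℝ)

/-- Iterated ordinary partial derivative. -/
def pI (n : ℕ) : List (Fin (2*n+1)) → ((Fin (2*n+1) → ℝ) → E) → ((Fin (2*n+1) → ℝ) → E)
  | [], f => f
  | i :: I, f => pDeriv n i (pI n I f)

/-- The Reeb derivative `T₀ f = ∂_{2n} f` (0-indexed). -/
def T0Deriv (n : ℕ) (f : (Fin (2*n+1) → ℝ) → E) (x : Fin (2*n+1) → ℝ) : E :=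
  fderiv ℝ f x (Pi.single (⟨2*n, by omega⟩ : Fin (2*n+1)) 1 : Fin (2*n+1) → ℝ)

/-- `X` is a contact vector field on `D`:  `dη₀(X, X_j) + X_j(η₀(X)) = 0` for all
horizontal `X_j`. -/
def IsContactVF (n : ℕ) (D : Set (Fin (2*n+1) → ℝ))
    (X : (Fin (2*n+1) → ℝ) → (Fin (2*n+1) → ℝ)) : Prop :=
  ∀ j : Fin (2*n), ∀ x ∈ D,
    dEta0 n (X x) (Xvec n j x) + hDeriv n j (fun y => eta0 n y (X y)) x = 0

/-- The contact vector field with generating function `g`: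
`X_g = g T₀ + Σ_j (-(X_{n+j} g) X_j + (X_j g) X_{n+j})`. -/
def genVF (n : ℕ) (g : (Fin (2*n+1) → ℝ) → ℝ) (x : Fin (2*n+1) → ℝ) :
    Fin (2*n+1) → ℝ :=
  g x • (Pi.single (⟨2*n, by omega⟩ : Fin (2*n+1)) 1 : Fin (2*n+1) → ℝ)
  + ∑ j : Fin n,
      (-(hDeriv n (⟨n + j, by have := j.2; omega⟩ : Fin (2*n)) g x) •
          Xvec n (⟨j, by have := j.2; omega⟩ : Fin (2*n)) x
        + (hDeriv n (⟨j, by have := j.2; omega⟩ : Fin (2*n)) g x) •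
          Xvec n (⟨n + j, by have := j.2; omega⟩ : Fin (2*n)) x)

/-!
Cut `f` off near `cl D'` and divide by a constant `P` of size `1 + ‖f‖_{D,s}`, which by the Sobolev
embedding bounds the cut-off function: near `cl D'` this writes `f = P g` with `|g| ≤ 1` compactly
supported and `X_I g` bounded in `L²` for `|I| ≤ s`. The Gagliardo–Nirenberg inequalities, obtained
by integration by parts along the fields `X_j`, bound `∫ |X_I g|^(2s/|I|)`. Hence the horizontal
jet of `g` grows at most like the powers `ρ ^ |I|` of a single function `ρ` with `∫ ρ^(2s) < ∞`. As
`f ≥ 1/C₀`, repeated use of `X_j (1/f) = -(1/f)² X_j f` shows that `X_I (1/f)` is bounded by a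
constant times `(P ρ) ^ |I|`, which is at most `P ^ s (1 + ρ ^ s)` and therefore lies in `L²(D')`.

For the Sobolev embedding, a value `g(z)` is the integral of the derivative of `g` of order `2n + 1`
in the directions `∂_{2n}, X_0, …, X_{2n-1}` (0-indexed), and `∂_{2n} = [X_n, X_0]` costs two
horizontal derivatives.
-/

open Set Filter Topology
open scoped ContDiff

/-- The coordinate space `ℝ^{2n+1}` of the Heisenberg group. -/
abbrev Heis (n : ℕ) := Fin (2 * n + 1) → ℝ

section HorizontalCalculus

variable {n : ℕ}

/-- The coefficient of `∂_{2n}` in `X_j` as a linear form, so that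
`X_j = ∂_j + XvecCoeff n j ∂_{2n}` for all `j`. -/
def XvecCoeff (n : ℕ) (j : Fin (2 * n)) : Heis n →L[ℝ] ℝ :=
  if h : (j : ℕ) < n then ContinuousLinearMap.proj ⟨n + j, by omega⟩ else 0

lemma Xvec_eq_single_add (j : Fin (2 * n)) (x : Heis n) :
    Xvec n j x = Pi.single j.castSucc 1 + XvecCoeff n j x • Pi.single (Fin.last (2 * n)) 1 := by
  unfold Xvec XvecCoeff
  split_ifs
  · rfl
  · rw [zero_apply, zero_smul, add_zero]; rfl

lemma XvecCoeff_congr {j : Fin (2 * n)} {x y : Heis n}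
    (h : ∀ k, k ≠ j.castSucc → k ≠ Fin.last (2 * n) → x k = y k) :
    XvecCoeff n j x = XvecCoeff n j y := by
  unfold XvecCoeff
  split_ifs
  · apply h <;> simp only [ne_eq, Fin.ext_iff, Fin.val_castSucc, Fin.val_last] <;> omega
  · rfl

lemma contDiff_Xvec (j : Fin (2 * n)) {k : WithTop ℕ∞} : ContDiff ℝ k (Xvec n j) := by
  rw [funext (Xvec_eq_single_add j)]
  fun_prop

lemma fderiv_Xvec_apply (j : Fin (2 * n)) (x v : Heis n) :
    fderiv ℝ (Xvec n j) x v = XvecCoeff n j v • Pi.single (Fin.last (2 * n)) 1 := by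
  have h := (((XvecCoeff n j).hasFDerivAt (x := x)).smul_const
    (Pi.single (Fin.last (2 * n)) 1 : Heis n)).const_add (Pi.single j.castSucc 1)
  rw [funext (Xvec_eq_single_add j), h.fderiv]
  rfl

lemma contDiffAt_hDeriv (j : Fin (2 * n)) {f : Heis n → E} {x : Heis n}
    (hf : ContDiffAt ℝ ∞ f x) : ContDiffAt ℝ ∞ (hDeriv n j f) x :=
  (hf.fderiv_right (by simp)).clm_apply (contDiff_Xvec j).contDiffAt

lemma contDiffAt_XI (I : List (Fin (2 * n))) {f : Heis n → E} {x : Heis n}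
    (hf : ContDiffAt ℝ ∞ f x) : ContDiffAt ℝ ∞ (XI n I f) x := by
  induction I with
  | nil => exact hf
  | cons j I ih => exact contDiffAt_hDeriv j ih

lemma contDiff_hDeriv (j : Fin (2 * n)) {f : Heis n → E} (hf : ContDiff ℝ ∞ f) :
    ContDiff ℝ ∞ (hDeriv n j f) :=
  contDiff_iff_contDiffAt.2 fun _ => contDiffAt_hDeriv j hf.contDiffAt

lemma contDiff_XI (I : List (Fin (2 * n))) {f : Heis n → E} (hf : ContDiff ℝ ∞ f) :
    ContDiff ℝ ∞ (XI n I f) :=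
  contDiff_iff_contDiffAt.2 fun _ => contDiffAt_XI I hf.contDiffAt

lemma hDeriv_congr (j : Fin (2 * n)) {f g : Heis n → E} {x : Heis n} (h : f =ᶠ[𝓝 x] g) :
    hDeriv n j f =ᶠ[𝓝 x] hDeriv n j g :=
  h.fderiv.mono fun y hy => congrArg (fun T : Heis n →L[ℝ] E => T (Xvec n j y)) hy

lemma XI_congr (I : List (Fin (2 * n))) {f g : Heis n → E} {x : Heis n} (h : f =ᶠ[𝓝 x] g) :
    XI n I f =ᶠ[𝓝 x] XI n I g := by
  induction I with
  | nil => exact h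
  | cons j I ih => exact hDeriv_congr j ih

lemma XI_append (I J : List (Fin (2 * n))) (f : Heis n → E) :
    XI n (I ++ J) f = XI n I (XI n J f) := by
  induction I with
  | nil => rfl
  | cons j I ih => simp only [List.cons_append, XI, ih]

lemma tsupport_hDeriv_subset (j : Fin (2 * n)) (f : Heis n → E) :
    tsupport (hDeriv n j f) ⊆ tsupport f := by
  refine closure_minimal (fun x hx => ?_) (isClosed_tsupport f)
  by_contra h
  have h0 : f =ᶠ[𝓝 x] fun _ => 0 := notMem_tsupport_iff_eventuallyEq.mp h
  exact hx (by simp [hDeriv, h0.fderiv_eq])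

lemma tsupport_XI_subset (I : List (Fin (2 * n))) (f : Heis n → E) :
    tsupport (XI n I f) ⊆ tsupport f := by
  induction I with
  | nil => exact le_rfl
  | cons j I ih => exact (tsupport_hDeriv_subset j _).trans ih

lemma hasCompactSupport_XI (I : List (Fin (2 * n))) {f : Heis n → E} (hf : HasCompactSupport f) :
    HasCompactSupport (XI n I f) :=
  hf.of_isClosed_subset (isClosed_tsupport _) (tsupport_XI_subset I f)

lemma eventually_differentiableAt {f : Heis n → E} {x : Heis n} (hf : ContDiffAt ℝ ∞ f x) :
    ∀ᶠ y in 𝓝 x, DifferentiableAt ℝ f y :=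
  ((hf.of_le (show (1 : WithTop ℕ∞) ≤ ∞ by simp)).eventually (by simp)).mono
    fun _ hy => hy.differentiableAt (by simp)

lemma XI_const_smul (I : List (Fin (2 * n))) (c : ℝ) (f : Heis n → E) :
    XI n I (c • f) = c • XI n I f := by
  induction I with
  | nil => rfl
  | cons j I ih =>
    funext x
    simp only [XI, ih, hDeriv, fderiv_const_smul_field, Pi.smul_apply, smul_apply]

lemma XI_add (I : List (Fin (2 * n))) {f g : Heis n → E} {x : Heis n}
    (hf : ContDiffAt ℝ ∞ f x) (hg : ContDiffAt ℝ ∞ g x) :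
    XI n I (f + g) x = XI n I f x + XI n I g x := by
  induction I using List.reverseRecOn generalizing f g with
  | nil => rfl
  | append_singleton I j ih =>
    have hX : hDeriv n j (f + g) =ᶠ[𝓝 x] hDeriv n j f + hDeriv n j g := by
      filter_upwards [eventually_differentiableAt hf, eventually_differentiableAt hg] with y hfy hgy
      simp only [hDeriv, fderiv_add hfy hgy, add_apply, Pi.add_apply]
    rw [XI_append, XI_append, XI_append]
    exact (XI_congr I hX).self_of_nhds.trans (ih (contDiffAt_hDeriv j hf) (contDiffAt_hDeriv j hg))

lemma XI_sub (I : List (Fin (2 * n))) {f g : Heis n → E} {x : Heis n}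
    (hf : ContDiffAt ℝ ∞ f x) (hg : ContDiffAt ℝ ∞ g x) :
    XI n I (f - g) x = XI n I f x - XI n I g x := by
  have hg' : ContDiffAt ℝ ∞ ((-1 : ℝ) • g) x := hg.const_smul (-1 : ℝ)
  rw [sub_eq_add_neg f, ← neg_one_smul ℝ g, XI_add I hf hg', XI_const_smul, Pi.smul_apply,
    neg_one_smul, ← sub_eq_add_neg]

lemma hDeriv_mul_apply {𝔸 : Type*} [NormedRing 𝔸] [NormedAlgebra ℝ 𝔸] (j : Fin (2 * n))
    {f g : Heis n → 𝔸} {x : Heis n} (hf : DifferentiableAt ℝ f x) (hg : DifferentiableAt ℝ g x) :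
    hDeriv n j (f * g) x = hDeriv n j f x * g x + f x * hDeriv n j g x := by
  simp [hDeriv, fderiv_mul' hf hg, add_comm]

lemma hDeriv_mul {𝔸 : Type*} [NormedRing 𝔸] [NormedAlgebra ℝ 𝔸] (j : Fin (2 * n))
    {f g : Heis n → 𝔸} {x : Heis n} (hf : ContDiffAt ℝ ∞ f x) (hg : ContDiffAt ℝ ∞ g x) :
    hDeriv n j (f * g) =ᶠ[𝓝 x] hDeriv n j f * g + f * hDeriv n j g := by
  filter_upwards [eventually_differentiableAt hf, eventually_differentiableAt hg] with y hfy hgy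
  exact hDeriv_mul_apply j hfy hgy

lemma hDeriv_inv (j : Fin (2 * n)) {f : Heis n → ℝ} {x : Heis n}
    (hf : ContDiffAt ℝ ∞ f x) (hx : f x ≠ 0) :
    hDeriv n j f⁻¹ =ᶠ[𝓝 x] (-1 : ℝ) • (f⁻¹ * (f⁻¹ * hDeriv n j f)) := by
  filter_upwards [eventually_differentiableAt hf, hf.continuousAt.eventually_ne hx] with y hfy hy
  have hinv := (hasDerivAt_inv hy).comp_hasFDerivAt y hfy.hasFDerivAt
  have hfd : fderiv ℝ f⁻¹ y = (-(f y ^ 2)⁻¹) • fderiv ℝ f y := hinv.fderiv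
  simp only [hDeriv, hfd, smul_apply, Pi.smul_apply, Pi.mul_apply, Pi.inv_apply, smul_eq_mul]
  ring

end HorizontalCalculus

section JetBound

variable {n l : ℕ} {x : Heis n} {A B σ : ℝ}

/-- The horizontal `l`-jet of `f` at `x` is bounded by `A`, when a horizontal derivative is given
weight `σ`. -/
def HorizontalJetBound (n l : ℕ) (f : Heis n → E) (x : Heis n) (A σ : ℝ) : Prop :=
  ∀ I : List (Fin (2 * n)), I.length ≤ l → ‖XI n I f x‖ ≤ A * σ ^ I.length

namespace HorizontalJetBound

lemma mono {f : Heis n → E} {l' : ℕ} (h : HorizontalJetBound n l f x A σ) (hl : l' ≤ l)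
    (hσ : 0 ≤ σ) (hAB : A ≤ B) : HorizontalJetBound n l' f x B σ :=
  fun I hI => (h I (hI.trans hl)).trans (by gcongr)

lemma congr {f g : Heis n → E} (h : HorizontalJetBound n l f x A σ) (hfg : f =ᶠ[𝓝 x] g) :
    HorizontalJetBound n l g x A σ := fun I hI => by
  rw [← (XI_congr I hfg).self_of_nhds]
  exact h I hI

lemma norm_le {f : Heis n → E} (h : HorizontalJetBound n l f x A σ) : ‖f x‖ ≤ A := by
  simpa [XI] using h [] (Nat.zero_le l)

lemma nonneg {f : Heis n → E} (h : HorizontalJetBound n l f x A σ) : 0 ≤ A :=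
  (norm_nonneg _).trans h.norm_le

lemma of_order_zero {f : Heis n → E} (h : ‖f x‖ ≤ A) : HorizontalJetBound n 0 f x A σ := by
  intro I hI
  obtain rfl := List.length_eq_zero_iff.1 (Nat.le_zero.1 hI)
  simpa [XI] using h

lemma const_smul {f : Heis n → E} (h : HorizontalJetBound n l f x A σ) (c : ℝ) :
    HorizontalJetBound n l (c • f) x (|c| * A) σ := fun I hI => by
  rw [XI_const_smul, Pi.smul_apply, norm_smul, Real.norm_eq_abs, mul_assoc]
  gcongr
  exact h I hI

lemma add {f g : Heis n → E} (hf : ContDiffAt ℝ ∞ f x) (hg : ContDiffAt ℝ ∞ g x)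
    (hfA : HorizontalJetBound n l f x A σ) (hgB : HorizontalJetBound n l g x B σ) :
    HorizontalJetBound n l (f + g) x (A + B) σ := fun I hI => by
  rw [XI_add I hf hg, add_mul]
  exact (norm_add_le _ _).trans (add_le_add (hfA I hI) (hgB I hI))

lemma apply_hDeriv {f : Heis n → E} (h : HorizontalJetBound n (l + 1) f x A σ) (j : Fin (2 * n)) :
    HorizontalJetBound n l (hDeriv n j f) x (A * σ) σ := fun I hI => by
  have hIj := h (I ++ [j]) (by simpa using hI)
  rwa [XI_append, List.length_append, List.length_singleton, pow_succ', ← mul_assoc] at hIj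

lemma of_hDeriv {f : Heis n → E} (h0 : ‖f x‖ ≤ A)
    (h : ∀ j, HorizontalJetBound n l (hDeriv n j f) x (A * σ) σ) :
    HorizontalJetBound n (l + 1) f x A σ := fun I hI => by
  induction I using List.reverseRecOn with
  | nil => simpa [XI] using h0
  | append_singleton I j _ =>
    rw [XI_append, List.length_append, List.length_singleton, pow_succ', ← mul_assoc]
    exact h j I (by simpa using hI)

lemma mul {𝔸 : Type*} [NormedRing 𝔸] [NormedAlgebra ℝ 𝔸] {f g : Heis n → 𝔸} (hσ : 0 ≤ σ)
    (hf : ContDiffAt ℝ ∞ f x) (hg : ContDiffAt ℝ ∞ g x) (hfA : HorizontalJetBound n l f x A σ)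
    (hgB : HorizontalJetBound n l g x B σ) :
    HorizontalJetBound n l (f * g) x (2 ^ l * (A * B)) σ := by
  induction l generalizing f g A B with
  | zero =>
    refine of_order_zero ?_
    rw [pow_zero, one_mul]
    exact norm_mul_le_of_le hfA.norm_le hgB.norm_le
  | succ l ih =>
    refine of_hDeriv ?_ fun j => ?_
    · calc ‖(f * g) x‖ ≤ A * B := norm_mul_le_of_le hfA.norm_le hgB.norm_le
        _ ≤ 2 ^ (l + 1) * (A * B) := le_mul_of_one_le_left
            (mul_nonneg hfA.nonneg hgB.nonneg) (one_le_pow₀ one_le_two)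
    have hfj := contDiffAt_hDeriv j hf
    have hgj := contDiffAt_hDeriv j hg
    have h₁ := ih hfj hg (hfA.apply_hDeriv j) (hgB.mono l.le_succ hσ le_rfl)
    have h₂ := ih hf hgj (hfA.mono l.le_succ hσ le_rfl) (hgB.apply_hDeriv j)
    refine ((h₁.add (hfj.mul hg) (hf.mul hgj) h₂).congr (hDeriv_mul j hf hg).symm).mono le_rfl hσ
      (le_of_eq ?_)
    ring

lemma exists_inv (l : ℕ) {c : ℝ} (hc : 0 < c) : ∃ C : ℝ, ∀ {n : ℕ} {f : Heis n → ℝ} {x : Heis n}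
    {σ : ℝ}, 0 ≤ σ → ContDiffAt ℝ ∞ f x → c ≤ f x →
      (∀ I : List (Fin (2 * n)), I ≠ [] → I.length ≤ l → ‖XI n I f x‖ ≤ σ ^ I.length) →
      HorizontalJetBound n l f⁻¹ x C σ := by
  have hinv {n : ℕ} {f : Heis n → ℝ} {x : Heis n} (hfx : c ≤ f x) : ‖f⁻¹ x‖ ≤ c⁻¹ := by
    rw [Pi.inv_apply, norm_inv]
    exact inv_anti₀ hc (hfx.trans (Real.le_norm_self _))
  induction l with
  | zero => exact ⟨c⁻¹, fun _ _ hfx _ => of_order_zero (hinv hfx)⟩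
  | succ l ih =>
    obtain ⟨C, hC⟩ := ih
    refine ⟨max c⁻¹ (2 ^ l * (C * (2 ^ l * C))), fun {n f x σ} hσ hf hfx hjet => ?_⟩
    refine of_hDeriv ((hinv hfx).trans (le_max_left _ _)) fun j => ?_
    have hf0 : f x ≠ 0 := (hc.trans_le hfx).ne'
    have hfinv : ContDiffAt ℝ ∞ f⁻¹ x := hf.inv hf0
    have hfj := contDiffAt_hDeriv j hf
    have hI := hC hσ hf hfx fun I hI hIl => hjet I hI (hIl.trans l.le_succ)
    have hXf : HorizontalJetBound n l (hDeriv n j f) x σ σ := fun I hI => by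
      simpa [XI_append, XI, pow_succ'] using hjet (I ++ [j]) (by simp) (by simpa using hI)
    have hprod := (hI.mul hσ hfinv (hfinv.mul hfj) (hI.mul hσ hfinv hfj hXf)).const_smul (-1)
    refine (hprod.congr (hDeriv_inv j hf hf0).symm).mono le_rfl hσ ?_
    calc |(-1 : ℝ)| * (2 ^ l * (C * (2 ^ l * (C * σ)))) = 2 ^ l * (C * (2 ^ l * C)) * σ := by
          rw [abs_neg, abs_one]; ring
      _ ≤ _ := by gcongr; exact le_max_right _ _

end HorizontalJetBound

end JetBound

section Sobolev

lemma enorm_le_lintegral_fderiv_line {V : Type*} [NormedAddCommGroup V] [NormedSpace ℝ V]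
    {F : V → E} (hF : ContDiff ℝ 1 F) (hc : HasCompactSupport F) {v : V} (hv : v ≠ 0) (z : V) :
    ‖F z‖ₑ ≤ ∫⁻ s : ℝ, ‖fderiv ℝ F (z + s • v) v‖ₑ := by
  have hline (s : ℝ) : HasDerivAt (fun s : ℝ => z + s • v) v s := by
    simpa using ((hasDerivAt_id s).smul_const v).const_add z
  have hderiv (s : ℝ) : deriv (fun s : ℝ => F (z + s • v)) s = fderiv ℝ F (z + s • v) v :=
    ((hF.differentiable (by simp) _).hasFDerivAt.comp_hasDerivAt s (hline s)).deriv
  have hemb : IsClosedEmbedding fun s : ℝ => z + s • v :=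
    (Homeomorph.addLeft z).isClosedEmbedding.comp (isClosedEmbedding_smul_left hv)
  have hFline : ContDiff ℝ 1 fun s : ℝ => F (z + s • v) := hF.comp (by fun_prop)
  calc ‖F z‖ₑ = ‖F (z + (0 : ℝ) • v)‖ₑ := by rw [zero_smul, add_zero]
    _ ≤ ∫⁻ s in Iic (0 : ℝ), ‖deriv (fun s : ℝ => F (z + s • v)) s‖ₑ :=
        (hc.comp_isClosedEmbedding hemb).enorm_le_lintegral_Ici_deriv hFline 0
    _ ≤ ∫⁻ s : ℝ, ‖deriv (fun s : ℝ => F (z + s • v)) s‖ₑ := setLIntegral_le_lintegral _ _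
    _ = ∫⁻ s : ℝ, ‖fderiv ℝ F (z + s • v) v‖ₑ := by simp only [hderiv]

lemma enorm_le_lmarginal_singleton {ι : Type*} [Fintype ι] [DecidableEq ι] {F : (ι → ℝ) → E}
    (hF : ContDiff ℝ 1 F) (hc : HasCompactSupport F) (i : ι) (z : ι → ℝ) :
    ‖F z‖ₑ ≤ (∫⋯∫⁻_{i}, fun x => ‖fderiv ℝ F x (Pi.single i 1)‖ₑ) z := by
  have hline (s : ℝ) : z + s • Pi.single i 1 = Function.update z i (z i + s) := by
    ext k
    rcases eq_or_ne k i with rfl | hk <;> simp [*]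
  have h := enorm_le_lintegral_fderiv_line hF hc (v := Pi.single i 1) (by simp) z
  simp only [hline] at h
  rw [lmarginal_singleton]
  rwa [lintegral_add_left_eq_self
    (fun r => ‖fderiv ℝ F (Function.update z i r) (Pi.single i 1)‖ₑ) (z i)] at h

/-- Along `∂_i + c ∂_t` the integral over the `t`-axis absorbs the shear, by translation
invariance, as `c` depends on neither `x_i` nor `x_t`. -/
lemma lmarginal_enorm_le_lmarginal_insert {ι : Type*} [Fintype ι] [DecidableEq ι]
    {F : (ι → ℝ) → E} (hF : ContDiff ℝ 1 F) (hc : HasCompactSupport F) {c : (ι → ℝ) → ℝ}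
    (hcont : Continuous c) {i t : ι} {S : Finset ι} (hi : i ∉ S) (ht : t ∈ S)
    (hci : ∀ x r, c (Function.update x i r) = c x) (hct : ∀ x r, c (Function.update x t r) = c x) :
    (∫⋯∫⁻_S, fun x => ‖F x‖ₑ) ≤
      ∫⋯∫⁻_insert i S, fun x => ‖fderiv ℝ F x (Pi.single i 1 + c x • Pi.single t 1)‖ₑ := by
  have hit : i ≠ t := fun h => hi (h ▸ ht)
  set G : (ι → ℝ) → ENNReal := fun x => ‖fderiv ℝ F x (Pi.single i 1 + c x • Pi.single t 1)‖ₑ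
  have hGcont : Continuous G := ((hF.continuous_fderiv (by simp)).clm_apply (by fun_prop)).enorm
  have hG : Measurable G := hGcont.measurable
  have hGt : Measurable fun x => ∫⁻ r : ℝ, G (Function.update x t r) := by
    have := hG.lmarginal (μ := fun _ : ι => (volume : Measure ℝ)) (s := {t})
    rwa [lmarginal_singleton] at this
  rw [lmarginal_erase' _ hF.continuous.enorm.measurable ht,
    lmarginal_erase' _ hG (Finset.mem_insert_of_mem ht), Finset.erase_insert_of_ne hit,
    lmarginal_insert' _ hGt (by simp [hi])]
  refine lmarginal_mono fun z => ?_
  have hline (r : ℝ) : ‖F (Function.update z t r)‖ₑ ≤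
      ∫⁻ s : ℝ, G (Function.update (Function.update z i (z i + s)) t (r + s * c z)) := by
    have hv : (Pi.single i 1 + c z • Pi.single t 1 : ι → ℝ) ≠ 0 := fun h => by
      simpa [hit] using congrFun h i
    have hpt (s : ℝ) : Function.update z t r + s • (Pi.single i 1 + c z • Pi.single t 1) =
        Function.update (Function.update z i (z i + s)) t (r + s * c z) := by
      ext k
      rcases eq_or_ne k t with rfl | hkt
      · simp [hit.symm]
      · rcases eq_or_ne k i with rfl | hki <;> simp [*]
    simpa only [G, hpt, hct, hci] using
      enorm_le_lintegral_fderiv_line hF hc hv (Function.update z t r)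
  calc ∫⁻ r : ℝ, ‖F (Function.update z t r)‖ₑ
      ≤ ∫⁻ r : ℝ, ∫⁻ s : ℝ, G (Function.update (Function.update z i (z i + s)) t (r + s * c z)) :=
        lintegral_mono hline
    _ = ∫⁻ s : ℝ, ∫⁻ r : ℝ, G (Function.update (Function.update z i (z i + s)) t (r + s * c z)) :=
        lintegral_lintegral_swap (hGcont.comp (by fun_prop)).aemeasurable
    _ = ∫⁻ s : ℝ, ∫⁻ r : ℝ, G (Function.update (Function.update z i (z i + s)) t r) :=
        lintegral_congr fun s => lintegral_add_right_eq_self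
          (fun r => G (Function.update (Function.update z i (z i + s)) t r)) (s * c z)
    _ = ∫⁻ s : ℝ, ∫⁻ r : ℝ, G (Function.update (Function.update z i s) t r) :=
        lintegral_add_left_eq_self
          (fun s => ∫⁻ r : ℝ, G (Function.update (Function.update z i s) t r)) (z i)

variable {n : ℕ}

lemma lmarginal_enorm_le_lmarginal_XI {F : Heis n → E} (hF : ContDiff ℝ ∞ F)
    (hc : HasCompactSupport F) {I : List (Fin (2 * n))} (hI : I.Nodup) :
    (∫⋯∫⁻_{Fin.last (2 * n)}, fun x => ‖F x‖ₑ) ≤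
      ∫⋯∫⁻_(I.map Fin.castSucc).toFinset ∪ {Fin.last (2 * n)}, fun x => ‖XI n I F x‖ₑ := by
  induction I with
  | nil => simp [XI]
  | cons j I ih =>
    obtain ⟨hj, hI⟩ := List.nodup_cons.1 hI
    refine (ih hI).trans ?_
    have hne : j.castSucc ≠ Fin.last (2 * n) := (Fin.castSucc_lt_last j).ne
    have h := lmarginal_enorm_le_lmarginal_insert ((contDiff_XI I hF).of_le (by simp))
      (hasCompactSupport_XI I hc) (XvecCoeff n j).continuous
      (i := j.castSucc) (t := Fin.last (2 * n))
      (S := (I.map Fin.castSucc).toFinset ∪ {Fin.last (2 * n)}) (by simp [hj, hne])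
      (by simp) (fun x r => XvecCoeff_congr fun k hk _ => Function.update_of_ne hk _ _)
      (fun x r => XvecCoeff_congr fun k _ hk => Function.update_of_ne hk _ _)
    simpa only [List.map_cons, List.toFinset_cons, Finset.insert_union, XI, hDeriv,
      Xvec_eq_single_add] using h

lemma toFinset_map_castSucc_finRange_union_last (N : ℕ) :
    ((List.finRange N).map Fin.castSucc).toFinset ∪ {Fin.last N} = Finset.univ := by
  ext i
  refine Fin.lastCases ?_ (fun j => ?_) i <;> simp

lemma contDiff_T0Deriv {f : Heis n → E} (hf : ContDiff ℝ ∞ f) : ContDiff ℝ ∞ (T0Deriv n f) :=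
  (hf.fderiv_right (by simp)).clm_apply contDiff_const

/-- Each of the `2n + 1` directions `∂_{2n}, X_0, …, X_{2n-1}` is integrated out once. -/
lemma enorm_le_lintegral_XI_T0Deriv {g : Heis n → E} (hg : ContDiff ℝ ∞ g)
    (hc : HasCompactSupport g) (z : Heis n) :
    ‖g z‖ₑ ≤ ∫⁻ x, ‖XI n (List.finRange (2 * n)) (T0Deriv n g) x‖ₑ := by
  have hTc : HasCompactSupport (T0Deriv n g) := hc.fderiv_apply ℝ _
  refine (enorm_le_lmarginal_singleton (hg.of_le (by simp)) hc (Fin.last (2 * n)) z).trans ?_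
  refine (lmarginal_enorm_le_lmarginal_XI (contDiff_T0Deriv hg) hTc (List.nodup_finRange _) z).trans
    (le_of_eq ?_)
  rw [toFinset_map_castSucc_finRange_union_last, lmarginal_univ]
  rfl

lemma XI_pair_eq (i j : Fin (2 * n)) {f : Heis n → E} (hf : ContDiff ℝ ∞ f) (x : Heis n) :
    XI n [i, j] f x = fderiv ℝ (fderiv ℝ f) x (Xvec n i x) (Xvec n j x) +
      fderiv ℝ f x (fderiv ℝ (Xvec n j) x (Xvec n i x)) := by
  have hf' : ContDiff ℝ 1 (fderiv ℝ f) := (hf.fderiv_right (m := ∞) (by simp)).of_le (by simp)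
  have hX : DifferentiableAt ℝ (Xvec n j) x :=
    (contDiff_Xvec j (k := 1)).differentiable one_ne_zero x
  have h : HasFDerivAt (hDeriv n j f) _ x :=
    (hf'.differentiable one_ne_zero x).hasFDerivAt.clm_apply hX.hasFDerivAt
  simp only [XI]
  rw [hDeriv, h.fderiv]
  simp [add_comm]

/-- The Lie bracket `[X_n, X_0] = ∂_{2n}` (0-indexed). -/
lemma T0Deriv_eq_XI_sub_XI (hn : 1 ≤ n) {f : Heis n → E} (hf : ContDiff ℝ ∞ f) :
    T0Deriv n f =
      XI n [⟨n, by omega⟩, ⟨0, by omega⟩] f - XI n [⟨0, by omega⟩, ⟨n, by omega⟩] f := by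
  funext x
  have hsymm : IsSymmSndFDerivAt ℝ f x :=
    hf.contDiffAt.isSymmSndFDerivAt (by simpa using WithTop.coe_le_coe.2 (le_top : (2 : ℕ∞) ≤ ⊤))
  have hcoeff₀ : XvecCoeff n ⟨0, by omega⟩ (Xvec n ⟨n, by omega⟩ x) = 1 := by
    simp [XvecCoeff, Xvec, Nat.pos_of_ne_zero (Nat.one_le_iff_ne_zero.1 hn)]
  have hcoeffₙ : XvecCoeff n ⟨n, by omega⟩ = 0 := by simp [XvecCoeff]
  rw [Pi.sub_apply, XI_pair_eq _ _ hf, XI_pair_eq _ _ hf, hsymm.eq, fderiv_Xvec_apply,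
    fderiv_Xvec_apply, hcoeff₀, hcoeffₙ, one_smul, zero_apply, zero_smul, map_zero, add_zero,
    add_sub_cancel_left]
  rfl

lemma abs_le_integral_add_integral {g : Heis n → ℝ} (hn : 1 ≤ n) (hg : ContDiff ℝ ∞ g)
    (hc : HasCompactSupport g) (z : Heis n) :
    |g z| ≤ ∫ x, |XI n (List.finRange (2 * n) ++ [⟨n, by omega⟩, ⟨0, by omega⟩]) g x| +
      |XI n (List.finRange (2 * n) ++ [⟨0, by omega⟩, ⟨n, by omega⟩]) g x| := by
  simp only [XI_append]
  set a := XI n [⟨n, by omega⟩, ⟨0, by omega⟩] g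
  set b := XI n [⟨0, by omega⟩, ⟨n, by omega⟩] g
  have ha : ContDiff ℝ ∞ a := contDiff_XI _ hg
  have hb : ContDiff ℝ ∞ b := contDiff_XI _ hg
  have hint {h : Heis n → ℝ} (hh : ContDiff ℝ ∞ h) (hhc : HasCompactSupport h) :
      Integrable fun x => |XI n (List.finRange (2 * n)) h x| :=
    ((contDiff_XI _ hh).continuous.integrable_of_hasCompactSupport (hasCompactSupport_XI _ hhc)).abs
  have hsum := (hint ha (hasCompactSupport_XI _ hc)).fun_add (hint hb (hasCompactSupport_XI _ hc))
  have hbound : ‖g z‖ₑ ≤ ENNReal.ofReal (∫ x, |XI n (List.finRange (2 * n)) a x| +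
      |XI n (List.finRange (2 * n)) b x|) := by
    refine (enorm_le_lintegral_XI_T0Deriv hg hc z).trans ?_
    rw [ofReal_integral_eq_lintegral_ofReal hsum (.of_forall fun x => by positivity)]
    refine lintegral_mono fun x => ?_
    rw [T0Deriv_eq_XI_sub_XI hn hg, XI_sub _ ha.contDiffAt hb.contDiffAt, Real.enorm_eq_ofReal_abs]
    exact ENNReal.ofReal_le_ofReal (abs_sub _ _)
  rw [Real.enorm_eq_ofReal_abs] at hbound
  exact (ENNReal.ofReal_le_ofReal_iff (integral_nonneg fun x => by positivity)).1 hbound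

end Sobolev

section IntegrationByParts

variable {n : ℕ}

lemma hasDerivAt_abs_rpow_mul_self {q : ℝ} (hq : 0 < q) (t : ℝ) :
    HasDerivAt (fun t : ℝ => |t| ^ q * t) ((q + 1) * |t| ^ q) t := by
  rcases eq_or_ne t 0 with rfl | ht
  · have hcont : Continuous fun t : ℝ => |t| ^ q :=
      continuous_abs.rpow_const fun _ => Or.inr hq.le
    have hlim : Tendsto (fun t : ℝ => |t| ^ q) (𝓝[≠] 0) (𝓝 ((q + 1) * |(0 : ℝ)| ^ q)) := by
      simpa [Real.zero_rpow hq.ne'] using (hcont.tendsto 0).mono_left nhdsWithin_le_nhds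
    rw [hasDerivAt_iff_tendsto_slope]
    refine hlim.congr' ?_
    filter_upwards [self_mem_nhdsWithin] with t (ht : t ≠ 0)
    rw [slope_def_field, mul_zero, sub_zero, sub_zero, mul_div_cancel_right₀ _ ht]
  · have habs : |t| ≠ 0 := abs_ne_zero.2 ht
    refine (((hasDerivAt_abs ht).rpow_const (p := q) (Or.inl habs)).mul
      (hasDerivAt_id t)).congr_deriv ?_
    calc ↑(SignType.sign t) * q * |t| ^ (q - 1) * t + |t| ^ q * 1
        = q * (|t| ^ (q - 1) * (↑(SignType.sign t) * t)) + |t| ^ q := by ring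
      _ = q * |t| ^ (q - 1 + 1) + |t| ^ q := by rw [sign_mul_self, Real.rpow_add_one habs]
      _ = (q + 1) * |t| ^ q := by rw [sub_add_cancel]; ring

lemma contDiff_abs_rpow_mul_self {q : ℝ} (hq : 0 < q) : ContDiff ℝ 1 fun t : ℝ => |t| ^ q * t := by
  rw [contDiff_one_iff_deriv, funext fun t => (hasDerivAt_abs_rpow_mul_self hq t).deriv]
  exact ⟨fun t => (hasDerivAt_abs_rpow_mul_self hq t).differentiableAt,
    continuous_const.mul (continuous_abs.rpow_const fun _ => Or.inr hq.le)⟩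

lemma integral_mul_fderiv_eq_zero {V : Type*} [NormedAddCommGroup V] [NormedSpace ℝ V]
    [FiniteDimensional ℝ V] [MeasurableSpace V] [BorelSpace V] (μ : Measure V) [μ.IsAddHaarMeasure]
    {F c : V → ℝ} (hF : ContDiff ℝ 1 F) (hFc : HasCompactSupport F) (hc : ContDiff ℝ 1 c) {v : V}
    (hcv : ∀ x, fderiv ℝ c x v = 0) : ∫ x, c x * fderiv ℝ F x v ∂μ = 0 := by
  have hF' : Continuous fun x => fderiv ℝ F x v :=
    (hF.continuous_fderiv one_ne_zero).clm_apply continuous_const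
  rw [integral_mul_fderiv_eq_neg_fderiv_mul_of_integrable]
  · simp [hcv]
  · simp [hcv]
  · exact (hc.continuous.mul hF').integrable_of_hasCompactSupport (hFc.fderiv_apply ℝ v).mul_left
  · exact (hc.continuous.mul hF.continuous).integrable_of_hasCompactSupport hFc.mul_left
  · exact fun x _ => hc.differentiable one_ne_zero x
  · exact fun x _ => hF.differentiable one_ne_zero x

lemma XvecCoeff_single_last (j : Fin (2 * n)) :
    XvecCoeff n j (Pi.single (Fin.last (2 * n)) 1) = 0 := by
  rw [← map_zero (XvecCoeff n j)]
  exact XvecCoeff_congr fun k _ hk => Pi.single_eq_of_ne hk _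

lemma integral_hDeriv_eq_zero (j : Fin (2 * n)) {F : Heis n → ℝ} (hF : ContDiff ℝ 1 F)
    (hc : HasCompactSupport F) : ∫ x, hDeriv n j F x = 0 := by
  have hcont (v : Heis n) : Continuous fun x => fderiv ℝ F x v :=
    (hF.continuous_fderiv one_ne_zero).clm_apply continuous_const
  have hsupp (v : Heis n) : HasCompactSupport fun x => fderiv ℝ F x v := hc.fderiv_apply ℝ v
  have hint₁ : Integrable fun x => fderiv ℝ F x (Pi.single j.castSucc 1) :=
    (hcont _).integrable_of_hasCompactSupport (hsupp _)
  have hint₂ : Integrable fun x =>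
      XvecCoeff n j x * fderiv ℝ F x (Pi.single (Fin.last (2 * n)) 1) :=
    ((XvecCoeff n j).continuous.mul (hcont _)).integrable_of_hasCompactSupport (hsupp _).mul_left
  simp only [hDeriv, Xvec_eq_single_add, map_add, map_smul, smul_eq_mul]
  rw [integral_add hint₁ hint₂, integral_mul_fderiv_eq_zero volume hF hc
    (XvecCoeff n j).contDiff (by simp [XvecCoeff_single_last]), add_zero]
  simpa using integral_mul_fderiv_eq_zero volume hF hc (contDiff_const (c := (1 : ℝ)))
    (v := Pi.single j.castSucc 1) (by simp)

lemma hDeriv_mul_abs_rpow_hDeriv (j : Fin (2 * n)) {h : Heis n → ℝ} (hh : ContDiff ℝ ∞ h) {p : ℝ}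
    (hp : 2 < p) (x : Heis n) :
    hDeriv n j (h * fun y => |hDeriv n j h y| ^ (p - 2) * hDeriv n j h y) x =
      |hDeriv n j h x| ^ p +
        (p - 1) * (h x * |hDeriv n j h x| ^ (p - 2) * hDeriv n j (hDeriv n j h) x) := by
  set h₁ := hDeriv n j h
  have hh₁ : DifferentiableAt ℝ h₁ x := (contDiff_hDeriv j hh).differentiable (by simp) x
  have hpow : HasFDerivAt (fun y => |h₁ y| ^ (p - 2) * h₁ y) _ x :=
    (hasDerivAt_abs_rpow_mul_self (sub_pos.2 hp) (h₁ x)).comp_hasFDerivAt x hh₁.hasFDerivAt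
  have hderiv : hDeriv n j (fun y => |h₁ y| ^ (p - 2) * h₁ y) x =
      (p - 1) * |h₁ x| ^ (p - 2) * hDeriv n j h₁ x := by
    rw [hDeriv, hpow.fderiv, smul_apply, smul_eq_mul, hDeriv]
    ring
  have hrpow : |h₁ x| ^ p = |h₁ x| ^ (p - 2) * (h₁ x * h₁ x) := by
    rw [← abs_mul_abs_self, ← sq, ← Real.rpow_two,
      ← Real.rpow_add' (abs_nonneg _) (by linarith), sub_add_cancel]
  rw [hDeriv_mul_apply j (hh.differentiable (by simp) x) hpow.differentiableAt, hderiv, hrpow]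
  ring

lemma integrable_abs_rpow {V : Type*} [TopologicalSpace V] [MeasurableSpace V]
    [OpensMeasurableSpace V] {μ : Measure V} [IsFiniteMeasureOnCompacts μ] {F : V → ℝ}
    (hF : Continuous F) (hc : HasCompactSupport F) {r : ℝ} (hr : 0 < r) :
    Integrable (fun x => |F x| ^ r) μ :=
  (hF.abs.rpow_const fun _ => Or.inr hr.le).integrable_of_hasCompactSupport
    (hc.comp_left (g := fun t => |t| ^ r) (by simp [Real.zero_rpow hr.ne']))

lemma integral_abs_hDeriv_rpow_le (j : Fin (2 * n)) {h : Heis n → ℝ} (hh : ContDiff ℝ ∞ h)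
    (hc : HasCompactSupport h) {p : ℝ} (hp : 2 < p) :
    ∫ x, |hDeriv n j h x| ^ p ≤
      (p - 1) * ∫ x, |h x| * |hDeriv n j h x| ^ (p - 2) * |hDeriv n j (hDeriv n j h) x| := by
  set h₁ := hDeriv n j h
  set h₂ := hDeriv n j h₁
  have hh₁ : ContDiff ℝ ∞ h₁ := contDiff_hDeriv j hh
  have hp2 : 0 < p - 2 := sub_pos.2 hp
  have hpow : ContDiff ℝ 1 fun y => |h₁ y| ^ (p - 2) * h₁ y :=
    (contDiff_abs_rpow_mul_self hp2).comp (hh₁.of_le (by simp))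
  have hzero : ∫ x, |h₁ x| ^ p + (p - 1) * (h x * |h₁ x| ^ (p - 2) * h₂ x) = 0 := by
    rw [← integral_hDeriv_eq_zero j ((hh.of_le (by simp)).mul hpow) hc.mul_right]
    exact integral_congr_ae (.of_forall fun x => (hDeriv_mul_abs_rpow_hDeriv j hh hp x).symm)
  have hint₁ : Integrable fun x => |h₁ x| ^ p :=
    integrable_abs_rpow hh₁.continuous (hasCompactSupport_XI [j] hc) (by linarith)
  have hint₂ : Integrable fun x => h x * |h₁ x| ^ (p - 2) * h₂ x :=
    ((hh.continuous.mul (hh₁.continuous.abs.rpow_const fun _ => Or.inr hp2.le)).mul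
      (contDiff_hDeriv j hh₁).continuous).integrable_of_hasCompactSupport hc.mul_right.mul_right
  rw [integral_add hint₁ (hint₂.const_mul _), integral_const_mul] at hzero
  have hneg : -(∫ x, h x * |h₁ x| ^ (p - 2) * h₂ x) ≤ ∫ x, |h x| * |h₁ x| ^ (p - 2) * |h₂ x| := by
    refine (neg_le_abs _).trans (abs_integral_le_integral_abs.trans_eq ?_)
    simp only [abs_mul, Real.abs_rpow_of_nonneg (abs_nonneg _), abs_abs]
  nlinarith

end IntegrationByParts

section GagliardoNirenberg

lemma exists_rpow_mul_rpow_mul_rpow_le {w₁ w₂ w₃ : ℝ} (h₁ : 0 ≤ w₁) (h₂ : 0 ≤ w₂) (h₃ : 0 < w₃)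
    (hw : w₁ + w₂ + w₃ = 1) {ε : ℝ} (hε : 0 < ε) :
    ∃ K : ℝ, 0 ≤ K ∧ ∀ a b c : ℝ, 0 ≤ a → 0 ≤ b → 0 ≤ c →
      a ^ w₁ * b ^ w₂ * c ^ w₃ ≤ ε * (a + b) + K * c := by
  set K := (ε ^ (-(w₁ + w₂))) ^ (1 / w₃) with hK
  have hK0 : 0 < K := by positivity
  have hKw : ε ^ w₁ * ε ^ w₂ * K ^ w₃ = 1 := by
    rw [hK, ← Real.rpow_mul (by positivity), one_div_mul_cancel h₃.ne', Real.rpow_one,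
      ← Real.rpow_add hε, ← Real.rpow_add hε, add_neg_cancel, Real.rpow_zero]
  refine ⟨K, hK0.le, fun a b c ha hb hc => ?_⟩
  calc a ^ w₁ * b ^ w₂ * c ^ w₃
      = (ε ^ w₁ * ε ^ w₂ * K ^ w₃) * (a ^ w₁ * b ^ w₂ * c ^ w₃) := by rw [hKw, one_mul]
    _ = (ε * a) ^ w₁ * (ε * b) ^ w₂ * (K * c) ^ w₃ := by
        rw [Real.mul_rpow hε.le ha, Real.mul_rpow hε.le hb, Real.mul_rpow hK0.le hc]; ring
    _ ≤ w₁ * (ε * a) + w₂ * (ε * b) + w₃ * (K * c) :=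
        Real.geom_mean_le_arith_mean3_weighted h₁ h₂ h₃.le (by positivity) (by positivity)
          (by positivity) hw
    _ ≤ 1 * (ε * a) + 1 * (ε * b) + 1 * (K * c) := by gcongr <;> linarith
    _ = ε * (a + b) + K * c := by ring

lemma exists_le_mul_of_forall_le_add {ι : Type*} {J : ι → ℕ → ℝ} {m : ℕ} (hJ₀ : ∀ i, J i 0 = 0)
    (h : ∀ k, k + 1 < m → ∀ ε > 0, ∃ K, 0 ≤ K ∧
      ∀ i, J i (k + 1) ≤ ε * (J i k + J i (k + 1)) + K * J i (k + 2)) {k : ℕ} (hk : k ≤ m) :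
    ∃ C, 0 ≤ C ∧ ∀ i, J i k ≤ C * J i m := by
  have hstep (k : ℕ) (hk : k < m) : ∃ C, 0 ≤ C ∧ ∀ i, J i k ≤ C * J i (k + 1) := by
    induction k with
    | zero => exact ⟨0, le_rfl, fun i => by rw [hJ₀, zero_mul]⟩
    | succ k ih =>
      obtain ⟨C, hC, hCJ⟩ := ih (by omega)
      obtain ⟨K, hK, hKJ⟩ := h k hk (1 / (2 * (C + 1))) (by positivity)
      refine ⟨2 * K, by positivity, fun i => ?_⟩
      have habsorb : 1 / (2 * (C + 1)) * (J i k + J i (k + 1)) ≤ J i (k + 1) / 2 :=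
        calc 1 / (2 * (C + 1)) * (J i k + J i (k + 1))
            ≤ 1 / (2 * (C + 1)) * (C * J i (k + 1) + J i (k + 1)) := by gcongr; exact hCJ i
          _ = J i (k + 1) / 2 := by field_simp
      linarith [hKJ i]
  induction hk using Nat.decreasingInduction with
  | self => exact ⟨1, zero_le_one, fun i => (one_mul _).ge⟩
  | of_succ k hk ih =>
    obtain ⟨C, hC, hCJ⟩ := ih
    obtain ⟨C', hC', hCJ'⟩ := hstep k hk
    refine ⟨C' * C, by positivity, fun i => (hCJ' i).trans ?_⟩
    rw [mul_assoc]
    gcongr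
    exact hCJ i

variable {n m k : ℕ} {g : Heis n → ℝ}

/-- Smooth compactly supported functions bounded by `1`: the class on which the interpolation
inequalities hold with uniform constants. -/
structure IsNormalizedTestFunction (g : Heis n → ℝ) : Prop where
  contDiff : ContDiff ℝ ∞ g
  hasCompactSupport : HasCompactSupport g
  abs_le_one (x : Heis n) : |g x| ≤ 1

/-- The density `∑_{|I| = k} |X_I g| ^ (2m/k)` interpolating between `|g| ≤ 1` and
`∑_{|I| = m} |X_I g|²`. The exponent at `k = 0` is `∞`, which for `|g| ≤ 1` amounts to the
value `0`. -/
def gnDensity (n m k : ℕ) (g : Heis n → ℝ) (x : Heis n) : ℝ :=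
  if k = 0 then 0 else ∑ I : Fin k → Fin (2 * n), |XI n (List.ofFn I) g x| ^ (2 * m / k : ℝ)

lemma gnDensity_zero (n m : ℕ) (g : Heis n → ℝ) (x : Heis n) : gnDensity n m 0 g x = 0 := if_pos rfl

lemma gnDensity_of_ne_zero (hk : k ≠ 0) (x : Heis n) :
    gnDensity n m k g x = ∑ I : Fin k → Fin (2 * n), |XI n (List.ofFn I) g x| ^ (2 * m / k : ℝ) :=
  if_neg hk

lemma gnDensity_self (hm : m ≠ 0) (x : Heis n) :
    gnDensity n m m g x = ∑ I : Fin m → Fin (2 * n), |XI n (List.ofFn I) g x| ^ 2 := by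
  simp [gnDensity_of_ne_zero hm, mul_div_cancel_right₀ (2 : ℝ) (Nat.cast_ne_zero.2 hm)]

lemma gnDensity_nonneg (x : Heis n) : 0 ≤ gnDensity n m k g x := by
  rw [gnDensity]
  split_ifs <;> positivity

lemma IsNormalizedTestFunction.integrable_abs_XI_rpow (hg : IsNormalizedTestFunction g)
    (I : List (Fin (2 * n))) {r : ℝ} (hr : 0 < r) : Integrable fun x => |XI n I g x| ^ r :=
  integrable_abs_rpow (contDiff_XI I hg.contDiff).continuous
    (hasCompactSupport_XI I hg.hasCompactSupport) hr

lemma IsNormalizedTestFunction.integrable_gnDensity (hg : IsNormalizedTestFunction g) (hm : 0 < m)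
    (k : ℕ) : Integrable (gnDensity n m k g) := by
  rcases eq_or_ne k 0 with rfl | hk
  · simp [funext (gnDensity_zero n m g)]
  · rw [funext (gnDensity_of_ne_zero hk)]
    exact integrable_finsetSum _ fun I _ => hg.integrable_abs_XI_rpow _ (by positivity)

lemma abs_XI_le_gnDensity_rpow {x : Heis n} (hgx : |g x| ≤ 1) (hm : 0 < m)
    (I : List (Fin (2 * n))) :
    |XI n I g x| ≤ gnDensity n m I.length g x ^ (I.length / (2 * m) : ℝ) := by
  rcases eq_or_ne I [] with rfl | hI
  · simpa [XI] using hgx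
  have hlen : I.length ≠ 0 := List.length_eq_zero_iff.not.2 hI
  have hterm : |XI n I g x| ^ (2 * m / I.length : ℝ) ≤ gnDensity n m I.length g x := by
    rw [gnDensity_of_ne_zero hlen]
    simpa only [List.ofFn_get] using Finset.single_le_sum
      (f := fun J : Fin I.length → Fin (2 * n) =>
        |XI n (List.ofFn J) g x| ^ (2 * m / I.length : ℝ))
      (fun J _ => by positivity) (Finset.mem_univ I.get)
  calc |XI n I g x|
      = (|XI n I g x| ^ (2 * m / I.length : ℝ)) ^ (I.length / (2 * m) : ℝ) := by
        rw [← Real.rpow_mul (abs_nonneg _), div_mul_div_cancel₀' (by positivity),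
          div_self (by positivity), Real.rpow_one]
    _ ≤ _ := by gcongr

lemma exists_abs_mul_abs_rpow_mul_abs_le (hk : k + 1 < m) {ε : ℝ} (hε : 0 < ε) :
    ∃ K : ℝ, 0 ≤ K ∧ ∀ {n : ℕ} {g : Heis n → ℝ} {x : Heis n}, |g x| ≤ 1 →
      ∀ (j : Fin (2 * n)) (I : Fin k → Fin (2 * n)),
        |XI n (List.ofFn I) g x| * |XI n (j :: List.ofFn I) g x| ^ (2 * m / ↑(k + 1) - 2 : ℝ) *
          |XI n (j :: j :: List.ofFn I) g x| ≤
        ε * (gnDensity n m k g x + gnDensity n m (k + 1) g x) + K * gnDensity n m (k + 2) g x := by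
  have hm : 0 < m := by omega
  have hexp : ((k + 1 : ℕ) / (2 * m) : ℝ) * (2 * m / (k + 1 : ℕ) - 2) = 1 - (k + 1 : ℕ) / m := by
    field_simp
  have hexp0 : (0 : ℝ) ≤ 1 - (k + 1 : ℕ) / m := by
    rw [sub_nonneg, div_le_one (by positivity)]
    exact_mod_cast hk.le
  obtain ⟨K, hK, hKle⟩ := exists_rpow_mul_rpow_mul_rpow_le (w₁ := k / (2 * m))
    (w₂ := 1 - (k + 1 : ℕ) / m) (w₃ := (k + 2 : ℕ) / (2 * m)) (by positivity) hexp0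
    (by positivity) (by push_cast; field_simp; ring) hε
  refine ⟨K, hK, fun {n g x} hgx j I => ?_⟩
  refine le_trans ?_ (hKle _ _ _ (gnDensity_nonneg x) (gnDensity_nonneg x) (gnDensity_nonneg x))
  have hpow : (0 : ℝ) ≤ 2 * m / (k + 1 : ℕ) - 2 := by
    rw [sub_nonneg, le_div_iff₀ (by positivity)]
    exact_mod_cast Nat.mul_le_mul_left 2 hk.le
  have h₀ := abs_XI_le_gnDensity_rpow hgx hm (List.ofFn I)
  have h₁ := abs_XI_le_gnDensity_rpow hgx hm (j :: List.ofFn I)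
  have h₂ := abs_XI_le_gnDensity_rpow hgx hm (j :: j :: List.ofFn I)
  simp only [List.length_cons, List.length_ofFn] at h₀ h₁ h₂
  have hD₀ : 0 ≤ gnDensity n m k g x := gnDensity_nonneg x
  have hD₁ : 0 ≤ gnDensity n m (k + 1) g x := gnDensity_nonneg x
  rw [← hexp, Real.rpow_mul hD₁]
  gcongr

lemma exists_integral_abs_XI_rpow_le (hk : k + 1 < m) {ε : ℝ} (hε : 0 < ε) :
    ∃ K : ℝ, 0 ≤ K ∧ ∀ {n : ℕ} {g : Heis n → ℝ}, IsNormalizedTestFunction g →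
      ∀ I : Fin (k + 1) → Fin (2 * n),
        ∫ x, |XI n (List.ofFn I) g x| ^ (2 * m / ↑(k + 1) : ℝ) ≤
          ε * ((∫ x, gnDensity n m k g x) + ∫ x, gnDensity n m (k + 1) g x) +
            K * ∫ x, gnDensity n m (k + 2) g x := by
  have hp : (2 : ℝ) < 2 * m / (k + 1 : ℕ) := by
    rw [lt_div_iff₀ (by positivity)]
    exact_mod_cast Nat.mul_lt_mul_of_pos_left hk two_pos
  set p : ℝ := 2 * m / (k + 1 : ℕ)
  have hp1 : 0 < p - 1 := by linarith
  obtain ⟨K, hK, hKle⟩ := exists_abs_mul_abs_rpow_mul_abs_le hk (ε := ε / (p - 1)) (by positivity)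
  refine ⟨(p - 1) * K, by positivity, fun {n g} hg I => ?_⟩
  have hD (k : ℕ) : Integrable (gnDensity n m k g) := hg.integrable_gnDensity (by omega) k
  have hint₁ := ((hD k).fun_add (hD (k + 1))).const_mul (ε / (p - 1))
  have hint₂ := (hD (k + 2)).const_mul K
  rw [List.ofFn_succ]
  calc _ ≤ (p - 1) * _ := integral_abs_hDeriv_rpow_le (I 0) (contDiff_XI _ hg.contDiff)
        (hasCompactSupport_XI _ hg.hasCompactSupport) hp
    _ ≤ (p - 1) * ∫ x, ε / (p - 1) * (gnDensity n m k g x + gnDensity n m (k + 1) g x) +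
          K * gnDensity n m (k + 2) g x := by
        refine mul_le_mul_of_nonneg_left ?_ hp1.le
        exact integral_mono_of_nonneg (.of_forall fun x => by positivity) (hint₁.fun_add hint₂)
          (.of_forall fun x => hKle (hg.abs_le_one x) (I 0) _)
    _ = _ := by
        rw [integral_add hint₁ hint₂, integral_const_mul, integral_const_mul,
          integral_add (hD k) (hD (k + 1))]
        field_simp

lemma exists_integral_gnDensity_succ_le (n : ℕ) (hk : k + 1 < m) {ε : ℝ} (hε : 0 < ε) :
    ∃ K : ℝ, 0 ≤ K ∧ ∀ g : Heis n → ℝ, IsNormalizedTestFunction g →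
      ∫ x, gnDensity n m (k + 1) g x ≤
        ε * ((∫ x, gnDensity n m k g x) + ∫ x, gnDensity n m (k + 1) g x) +
          K * ∫ x, gnDensity n m (k + 2) g x := by
  have hm : 0 < m := by omega
  set N : ℝ := (Fintype.card (Fin (k + 1) → Fin (2 * n)) : ℝ) with hN
  obtain ⟨K, hK, hKle⟩ := exists_integral_abs_XI_rpow_le hk (ε := ε / (N + 1)) (by positivity)
  refine ⟨N * K, by positivity, fun g hg => ?_⟩
  have hsum : ∫ x, gnDensity n m (k + 1) g x =
      ∑ I : Fin (k + 1) → Fin (2 * n), ∫ x, |XI n (List.ofFn I) g x| ^ (2 * m / ↑(k + 1) : ℝ) := by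
    rw [funext (gnDensity_of_ne_zero k.succ_ne_zero),
      integral_finsetSum _ fun I _ => hg.integrable_abs_XI_rpow _ (by positivity)]
  set A := ∫ x, gnDensity n m k g x
  set B := ∫ x, gnDensity n m (k + 1) g x
  set R := ∫ x, gnDensity n m (k + 2) g x
  have hA : 0 ≤ A := integral_nonneg fun x => gnDensity_nonneg x
  have hB : 0 ≤ B := integral_nonneg fun x => gnDensity_nonneg x
  calc B ≤ N * (ε / (N + 1) * (A + B) + K * R) := by
        rw [hsum]
        refine (Finset.sum_le_card_nsmul _ _ _ fun I _ => hKle hg I).trans_eq ?_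
        rw [nsmul_eq_mul, Finset.card_univ, ← hN, ← hsum]
    _ = N / (N + 1) * (ε * (A + B)) + N * K * R := by ring
    _ ≤ 1 * (ε * (A + B)) + N * K * R := by
        gcongr
        exact div_le_one_of_le₀ (by linarith) (by positivity)
    _ = ε * (A + B) + N * K * R := by rw [one_mul]

lemma exists_integral_gnDensity_le (n : ℕ) {m : ℕ} (hk : k ≤ m) :
    ∃ C : ℝ, 0 ≤ C ∧ ∀ g : Heis n → ℝ, IsNormalizedTestFunction g →
      ∫ x, gnDensity n m k g x ≤ C * ∫ x, gnDensity n m m g x := by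
  obtain ⟨C, hC, hCle⟩ := exists_le_mul_of_forall_le_add
    (J := fun (g : {g : Heis n → ℝ // IsNormalizedTestFunction g}) k => ∫ x, gnDensity n m k g x)
    (by simp [gnDensity_zero])
    (fun k hk ε hε => (exists_integral_gnDensity_succ_le n hk hε).imp fun K hK =>
      ⟨hK.1, fun g => hK.2 g g.2⟩) hk
  exact ⟨C, hC, fun g hg => hCle ⟨g, hg⟩⟩

end GagliardoNirenberg

section Localization

lemma integrableOn_of_forall_exists_tendsto {X G : Type*} [NormedAddCommGroup G]
    [TopologicalSpace X] [MeasurableSpace X] [OpensMeasurableSpace X] {μ : Measure X}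
    [IsLocallyFiniteMeasure μ] {F : X → G} {D : Set X} (hD : MeasurableSet D)
    (hDc : IsCompact (closure D)) (hF : AEStronglyMeasurable F (μ.restrict D))
    (hlim : ∀ x ∈ closure D, ∃ c, Tendsto F (𝓝[D] x) (𝓝 c)) : IntegrableOn F D μ := by
  have hloc : LocallyIntegrableOn F (closure D) (μ.restrict D) := fun x hx => by
    obtain ⟨c, hc⟩ := hlim x hx
    have := hD.nhdsWithin_isMeasurablyGenerated x
    obtain ⟨u, hu, hFu⟩ := hc.integrableAtFilter (μ := μ) ⟨D, self_mem_nhdsWithin, hF⟩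
      (μ.finiteAt_nhdsWithin x D)
    obtain ⟨V, hV, hxV, hVu⟩ := mem_nhdsWithin.1 hu
    refine ⟨V, mem_nhdsWithin_of_mem_nhds (hV.mem_nhds hxV), ?_⟩
    rw [IntegrableOn, Measure.restrict_restrict hV.measurableSet]
    exact hFu.mono_set hVu
  have h := hloc.integrableOn_isCompact hDc
  rwa [IntegrableOn, Measure.restrict_restrict isClosed_closure.measurableSet,
    inter_eq_self_of_subset_right subset_closure] at h

variable {n s : ℕ} {D K : Set (Heis n)}

lemma exists_contDiffWithinAt_eventuallyEq_XI (hD : IsOpen D) {f : Heis n → E} {x : Heis n}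
    (hf : ContDiffWithinAt ℝ ∞ f D x) (I : List (Fin (2 * n))) (k : ℕ) :
    ∃ b, ContDiffWithinAt ℝ k b D x ∧ b =ᶠ[𝓝[D] x] XI n I f := by
  induction I generalizing k with
  | nil => exact ⟨f, hf.of_le (by exact_mod_cast le_top), .rfl⟩
  | cons j I ih =>
    obtain ⟨b, hb, hbXI⟩ := ih (k + 1)
    obtain ⟨u, hu, -, -, b', hbb', hb'⟩ :=
      (contDiffWithinAt_succ_iff_hasFDerivWithinAt' (n := k) (by simp)).1 (by exact_mod_cast hb)
    refine ⟨fun y => b' y (Xvec n j y), hb'.clm_apply (contDiff_Xvec j).contDiffWithinAt, ?_⟩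
    filter_upwards [self_mem_nhdsWithin, nhdsWithin_mono x (subset_insert x D) hu,
      eventually_eventually_nhdsWithin.2 hbXI] with y hyD hyu hy
    have hbXI_y : b =ᶠ[𝓝 y] XI n I f := by rwa [hD.nhdsWithin_eq hyD] at hy
    have hderiv := ((hbb' y hyu).hasFDerivAt (hD.mem_nhds hyD)).congr_of_eventuallyEq hbXI_y.symm
    rw [XI, hDeriv, hderiv.fderiv]

/-- The pointwise sum `∑_{|I| ≤ s} ‖X_I f‖²`, whose integral over `D` is `‖f‖_{D,s}²`. -/
def jetNormSq (n s : ℕ) (f : Heis n → E) (x : Heis n) : ℝ :=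
  ∑ t ∈ Finset.range (s + 1), ∑ I : Fin t → Fin (2 * n), ‖XI n (List.ofFn I) f x‖ ^ 2

lemma norm_XI_sq_le_jetNormSq {I : List (Fin (2 * n))} (hI : I.length ≤ s) (f : Heis n → E)
    (x : Heis n) : ‖XI n I f x‖ ^ 2 ≤ jetNormSq n s f x :=
  calc ‖XI n I f x‖ ^ 2 = ‖XI n (List.ofFn I.get) f x‖ ^ 2 := by rw [List.ofFn_get]
    _ ≤ ∑ J : Fin I.length → Fin (2 * n), ‖XI n (List.ofFn J) f x‖ ^ 2 :=
        Finset.single_le_sum (f := fun J => ‖XI n (List.ofFn J) f x‖ ^ 2)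
          (fun J _ => by positivity) (Finset.mem_univ I.get)
    _ ≤ jetNormSq n s f x :=
        Finset.single_le_sum
          (f := fun t => ∑ J : Fin t → Fin (2 * n), ‖XI n (List.ofFn J) f x‖ ^ 2)
          (fun t _ => by positivity) (Finset.mem_range.2 (Nat.lt_succ_of_le hI))

lemma integrableOn_norm_XI_sq (hD : IsOpen D) (hDb : IsBounded D) {f : Heis n → E}
    (hf : ContDiffOn ℝ ∞ f (closure D)) (I : List (Fin (2 * n))) :
    IntegrableOn (fun x => ‖XI n I f x‖ ^ 2) D := by
  have hcont : ContinuousOn (fun x => ‖XI n I f x‖ ^ 2) D := fun x hx =>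
    ((contDiffAt_XI I (hf.contDiffAt (mem_of_superset (hD.mem_nhds hx) subset_closure)
      )).continuousAt.norm.pow 2).continuousWithinAt
  refine integrableOn_of_forall_exists_tendsto hD.measurableSet hDb.isCompact_closure
    (hcont.aestronglyMeasurable hD.measurableSet) fun x hx => ?_
  obtain ⟨b, hb, hbXI⟩ :=
    exists_contDiffWithinAt_eventuallyEq_XI hD ((hf x hx).mono subset_closure) I 0
  exact ⟨_, (hb.continuousWithinAt.tendsto.congr' hbXI).norm.pow 2⟩

lemma integrableOn_jetNormSq (hD : IsOpen D) (hDb : IsBounded D) {f : Heis n → E}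
    (hf : ContDiffOn ℝ ∞ f (closure D)) : IntegrableOn (jetNormSq n s f) D :=
  integrable_finsetSum _ fun _ _ => integrable_finsetSum _ fun _ _ =>
    integrableOn_norm_XI_sq hD hDb hf _

lemma integral_jetNormSq (hD : IsOpen D) (hDb : IsBounded D) {f : Heis n → E}
    (hf : ContDiffOn ℝ ∞ f (closure D)) : ∫ x in D, jetNormSq n s f x = fsNorm n D s f ^ 2 := by
  have hnonneg : 0 ≤ fsNormSq n D s f := Finset.sum_nonneg fun _ _ => Finset.sum_nonneg fun _ _ =>
    integral_nonneg fun _ => by positivity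
  rw [fsNorm, Real.sq_sqrt hnonneg]
  have hint := integrableOn_norm_XI_sq hD hDb hf
  simp only [jetNormSq, fsNormSq]
  rw [integral_finsetSum _ fun t _ => integrable_finsetSum _ fun I _ => hint _]
  exact Finset.sum_congr rfl fun t _ => integral_finsetSum _ fun I _ => hint _

open scoped Manifold in
lemma exists_contDiff_eventuallyEq_one {V : Type*} [NormedAddCommGroup V] [NormedSpace ℝ V]
    [FiniteDimensional ℝ V] {K U : Set V} (hK : IsCompact K) (hU : IsOpen U) (hKU : K ⊆ U) :
    ∃ χ : V → ℝ, ContDiff ℝ ∞ χ ∧ HasCompactSupport χ ∧ tsupport χ ⊆ U ∧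
      ∀ x ∈ K, χ =ᶠ[𝓝 x] 1 := by
  obtain ⟨L, hL, hKL, hLU⟩ := exists_compact_between hK hU hKU
  obtain ⟨χ, hχ1, hχ0, -⟩ :=
    exists_contMDiffMap_one_nhds_of_subset_interior (n := ⊤) 𝓘(ℝ, V) hK.isClosed hKL
  have hsupp : Function.support χ ⊆ L := fun x hx => by_contra fun hxL => hx (hχ0 x hxL)
  exact ⟨χ, χ.contMDiff.contDiff, .of_support_subset_isCompact hL hsupp,
    (closure_minimal hsupp hL.isClosed).trans hLU, eventually_nhdsSet_iff_forall.1 hχ1⟩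

lemma contDiff_mul_of_tsupport_subset {V : Type*} [NormedAddCommGroup V] [NormedSpace ℝ V]
    {χ f : V → ℝ} {U : Set V} (hχ : ContDiff ℝ ∞ χ) (hU : IsOpen U) (hχU : tsupport χ ⊆ U)
    (hf : ContDiffOn ℝ ∞ f U) : ContDiff ℝ ∞ (χ * f) := by
  refine (contMDiff_of_tsupport fun x hx => ContDiffAt.contMDiffAt ?_).contDiff
  exact hχ.contDiffAt.mul (hf.contDiffAt (hU.mem_nhds (hχU (tsupport_mul_subset_left hx))))

lemma exists_horizontalJetBound {χ : Heis n → ℝ} (hχ : ContDiff ℝ ∞ χ) (hχc : HasCompactSupport χ)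
    (s : ℕ) : ∃ M, ∀ x, HorizontalJetBound n s χ x M 1 := by
  choose c hc using fun I : List (Fin (2 * n)) =>
    (contDiff_XI I hχ).continuous.bounded_above_of_compact_support (hasCompactSupport_XI I hχc)
  obtain ⟨M, hM⟩ := ((List.finite_length_le (Fin (2 * n)) s).image c).bddAbove
  refine ⟨M, fun x I hI => ?_⟩
  rw [one_pow, mul_one]
  exact (hc I x).trans (hM ⟨I, hI, rfl⟩)

lemma exists_norm_XI_mul_sq_le {χ : Heis n → ℝ} (hχ : ContDiff ℝ ∞ χ) (hχc : HasCompactSupport χ)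
    (s : ℕ) : ∃ C, 0 ≤ C ∧ ∀ {f : Heis n → ℝ} {x : Heis n}, ContDiffAt ℝ ∞ f x →
      ∀ I : List (Fin (2 * n)), I.length ≤ s → ‖XI n I (χ * f) x‖ ^ 2 ≤ C * jetNormSq n s f x := by
  obtain ⟨M, hM⟩ := exists_horizontalJetBound hχ hχc s
  refine ⟨(2 ^ s * M) ^ 2, by positivity, fun {f x} hf I hI => ?_⟩
  have hf_jet : HorizontalJetBound n s f x (√(jetNormSq n s f x)) 1 := fun J hJ => by
    rw [one_pow, mul_one]
    exact Real.le_sqrt_of_sq_le (norm_XI_sq_le_jetNormSq hJ f x)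
  have hprod := (hM x).mul zero_le_one hχ.contDiffAt hf hf_jet I hI
  have hnonneg : 0 ≤ jetNormSq n s f x := by rw [jetNormSq]; positivity
  calc ‖XI n I (χ * f) x‖ ^ 2 ≤ (2 ^ s * (M * √(jetNormSq n s f x)) * 1 ^ I.length) ^ 2 := by
        gcongr
    _ = (2 ^ s * M) ^ 2 * √(jetNormSq n s f x) ^ 2 := by rw [one_pow]; ring
    _ = (2 ^ s * M) ^ 2 * jetNormSq n s f x := by rw [Real.sq_sqrt hnonneg]

lemma exists_integral_norm_XI_mul_sq_le (hD : IsOpen D) (hDb : IsBounded D) {χ : Heis n → ℝ}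
    (hχ : ContDiff ℝ ∞ χ) (hχc : HasCompactSupport χ) (hχD : tsupport χ ⊆ D) (s : ℕ) :
    ∃ C, 0 ≤ C ∧ ∀ f : Heis n → ℝ, ContDiffOn ℝ ∞ f (closure D) →
      ∀ I : List (Fin (2 * n)), I.length ≤ s →
        ∫ x, ‖XI n I (χ * f) x‖ ^ 2 ≤ C * fsNorm n D s f ^ 2 := by
  obtain ⟨C, hC, hpt⟩ := exists_norm_XI_mul_sq_le hχ hχc s
  refine ⟨C, hC, fun f hf I hI => ?_⟩
  have hzero : ∀ x ∉ D, ‖XI n I (χ * f) x‖ ^ 2 = 0 := fun x hx => by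
    have hx' : x ∉ tsupport (XI n I (χ * f)) := fun h =>
      hx (hχD (tsupport_mul_subset_left (tsupport_XI_subset I _ h)))
    simp [image_eq_zero_of_notMem_tsupport hx']
  rw [← setIntegral_eq_integral_of_forall_compl_eq_zero hzero, ← integral_jetNormSq hD hDb hf,
    ← integral_const_mul]
  refine integral_mono_of_nonneg (.of_forall fun x => by positivity)
    ((integrableOn_jetNormSq hD hDb hf).const_mul C) ?_
  filter_upwards [ae_restrict_mem hD.measurableSet] with x hx
  exact hpt (hf.contDiffAt (mem_of_superset (hD.mem_nhds hx) subset_closure)) I hI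

lemma integral_norm_le_integral_norm_sq_div_add {X G : Type*} [NormedAddCommGroup G]
    [MeasurableSpace X] {μ : Measure X} {F : X → G} {D : Set X} (hDμ : μ D ≠ ⊤)
    (hF : Integrable (fun x => ‖F x‖ ^ 2) μ) (hFD : ∀ x ∉ D, F x = 0) {P : ℝ} (hP : 0 < P) :
    ∫ x, ‖F x‖ ∂μ ≤ (∫ x, ‖F x‖ ^ 2 ∂μ) / P + μ.real D * P := by
  have hconst : IntegrableOn (fun _ => P) D μ := integrableOn_const hDμ
  calc ∫ x, ‖F x‖ ∂μ = ∫ x in D, ‖F x‖ ∂μ :=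
        (setIntegral_eq_integral_of_forall_compl_eq_zero fun x hx => by simp [hFD x hx]).symm
    _ ≤ ∫ x in D, (‖F x‖ ^ 2 / P + P) ∂μ := by
        refine integral_mono_of_nonneg (.of_forall fun x => norm_nonneg _)
          ((hF.integrableOn.div_const P).fun_add hconst) (.of_forall fun x => ?_)
        have hsq : 0 ≤ (‖F x‖ / P - 1 / 2) ^ 2 * P := by positivity
        have hexp : (‖F x‖ / P - 1 / 2) ^ 2 * P = ‖F x‖ ^ 2 / P + P / 4 - ‖F x‖ := by
          field_simp
          ring
        simp only
        linarith
    _ = (∫ x in D, ‖F x‖ ^ 2 ∂μ) / P + μ.real D * P := by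
        rw [integral_add (hF.integrableOn.div_const P) hconst, integral_div, setIntegral_const,
          smul_eq_mul]
    _ ≤ (∫ x, ‖F x‖ ^ 2 ∂μ) / P + μ.real D * P := by
        gcongr ?_ / _ + _
        exact setIntegral_le_integral hF (.of_forall fun x => by positivity)

lemma exists_integral_norm_XI_mul_le (hD : IsOpen D) (hDb : IsBounded D) {χ : Heis n → ℝ}
    (hχ : ContDiff ℝ ∞ χ) (hχc : HasCompactSupport χ) (hχD : tsupport χ ⊆ D) (s : ℕ) :
    ∃ C, 0 ≤ C ∧ ∀ f : Heis n → ℝ, ContDiffOn ℝ ∞ f (closure D) →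
      ∀ I : List (Fin (2 * n)), I.length ≤ s →
        ∫ x, ‖XI n I (χ * f) x‖ ≤ C * (1 + fsNorm n D s f) := by
  obtain ⟨C, hC, hL2⟩ := exists_integral_norm_XI_mul_sq_le hD hDb hχ hχc hχD s
  refine ⟨C + volume.real D, by positivity, fun f hf I hI => ?_⟩
  have hN : 0 ≤ fsNorm n D s f := Real.sqrt_nonneg _
  have hcont : Continuous (XI n I (χ * f)) :=
    (contDiff_XI I (contDiff_mul_of_tsupport_subset hχ hD hχD (hf.mono subset_closure))).continuous
  have hsupp : HasCompactSupport (XI n I (χ * f)) := hasCompactSupport_XI I hχc.mul_right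
  have hint : Integrable fun x => ‖XI n I (χ * f) x‖ ^ 2 :=
    (hcont.memLp_of_hasCompactSupport hsupp).integrable_norm_pow two_ne_zero
  have hzero : ∀ x ∉ D, XI n I (χ * f) x = 0 := fun x hx =>
    image_eq_zero_of_notMem_tsupport fun h =>
      hx (hχD (tsupport_mul_subset_left (tsupport_XI_subset I _ h)))
  set P := 1 + fsNorm n D s f
  have hP : 0 < P := by positivity
  calc ∫ x, ‖XI n I (χ * f) x‖
      ≤ (∫ x, ‖XI n I (χ * f) x‖ ^ 2) / P + volume.real D * P :=
        integral_norm_le_integral_norm_sq_div_add hDb.measure_lt_top.ne hint hzero hP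
    _ ≤ C * P ^ 2 / P + volume.real D * P := by
        gcongr
        refine (hL2 f hf I hI).trans ?_
        gcongr
        linarith
    _ = (C + volume.real D) * P := by field_simp

/-- `2n + 2` is the homogeneous dimension of the Heisenberg group. -/
lemma exists_abs_mul_le_fsNorm (hn : 1 ≤ n) (hs : 2 * n + 2 ≤ s) (hD : IsOpen D)
    (hDb : IsBounded D) {χ : Heis n → ℝ} (hχ : ContDiff ℝ ∞ χ) (hχc : HasCompactSupport χ)
    (hχD : tsupport χ ⊆ D) :
    ∃ C, 0 ≤ C ∧ ∀ f : Heis n → ℝ, ContDiffOn ℝ ∞ f (closure D) → ∀ x,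
      |(χ * f) x| ≤ C * (1 + fsNorm n D s f) := by
  obtain ⟨C, hC, hL1⟩ := exists_integral_norm_XI_mul_le hD hDb hχ hχc hχD s
  refine ⟨2 * C, by positivity, fun f hf x => ?_⟩
  have hsmooth := contDiff_mul_of_tsupport_subset hχ hD hχD (hf.mono subset_closure)
  have hint (I : List (Fin (2 * n))) : Integrable fun x => |XI n I (χ * f) x| :=
    ((contDiff_XI I hsmooth).continuous.integrable_of_hasCompactSupport
      (hasCompactSupport_XI I hχc.mul_right)).abs
  have hword (i j : Fin (2 * n)) :
      ∫ x, |XI n (List.finRange (2 * n) ++ [i, j]) (χ * f) x| ≤ C * (1 + fsNorm n D s f) :=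
    hL1 f hf _ (by simpa using hs)
  refine (abs_le_integral_add_integral hn hsmooth hχc.mul_right x).trans ?_
  rw [integral_add (hint _) (hint _)]
  exact (add_le_add (hword _ _) (hword _ _)).trans_eq (by ring)

lemma exists_normalized_localization (hn : 1 ≤ n) (hs : 2 * n + 2 ≤ s) (hD : IsOpen D)
    (hDb : IsBounded D) (hK : IsCompact K) (hKD : K ⊆ D) :
    ∃ C, 1 ≤ C ∧ ∀ f : Heis n → ℝ, ContDiffOn ℝ ∞ f (closure D) →
      ∃ g, IsNormalizedTestFunction g ∧
        (∀ x ∈ K, f =ᶠ[𝓝 x] (C * (1 + fsNorm n D s f)) • g) ∧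
        ∀ I : List (Fin (2 * n)), I.length ≤ s → ∫ x, |XI n I g x| ^ 2 ≤ C := by
  obtain ⟨χ, hχ, hχc, hχD, hχ1⟩ := exists_contDiff_eventuallyEq_one hK hD hKD
  obtain ⟨A, hA, hsup⟩ := exists_abs_mul_le_fsNorm hn hs hD hDb hχ hχc hχD
  obtain ⟨B, hB, hL2⟩ := exists_integral_norm_XI_mul_sq_le hD hDb hχ hχc hχD s
  set C := 1 + A + B
  have hC : 1 ≤ C := by linarith
  refine ⟨C, hC, fun f hf => ?_⟩
  have hN : 0 ≤ fsNorm n D s f := Real.sqrt_nonneg _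
  set P := C * (1 + fsNorm n D s f)
  have hP : 0 < P := by positivity
  have hPN : fsNorm n D s f ≤ P := by nlinarith
  have hsmooth := contDiff_mul_of_tsupport_subset hχ hD hχD (hf.mono subset_closure)
  refine ⟨P⁻¹ • (χ * f), ⟨contDiff_const.smul hsmooth, hχc.mul_right.smul_left, fun x => ?_⟩,
    fun x hx => ?_, fun I hI => ?_⟩
  · rw [Pi.smul_apply, smul_eq_mul, abs_mul, abs_of_pos (inv_pos.2 hP), inv_mul_le_one₀ hP]
    exact (hsup f hf x).trans (mul_le_mul_of_nonneg_right (by linarith) (by positivity))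
  · filter_upwards [hχ1 x hx] with y hy
    rw [smul_inv_smul₀ hP.ne', Pi.mul_apply, hy, Pi.one_apply, one_mul]
  · have hscale (x : Heis n) :
        |XI n I (P⁻¹ • (χ * f)) x| ^ 2 = ‖XI n I (χ * f) x‖ ^ 2 / P ^ 2 := by
      rw [XI_const_smul, Pi.smul_apply, smul_eq_mul, abs_mul, abs_of_pos (inv_pos.2 hP),
        Real.norm_eq_abs]
      field_simp
    simp only [hscale]
    rw [integral_div, div_le_iff₀ (by positivity)]
    calc ∫ x, ‖XI n I (χ * f) x‖ ^ 2 ≤ B * fsNorm n D s f ^ 2 := hL2 f hf I hI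
      _ ≤ C * P ^ 2 := by gcongr; linarith

end Localization

section Reciprocal

variable {n m s : ℕ} {D : Set (Heis n)} {g : Heis n → ℝ}

/-- The sum of the densities of all orders `k ≤ m`, which controls the whole horizontal `m`-jet
of `g`. -/
def gnJetDensity (n m : ℕ) (g : Heis n → ℝ) (x : Heis n) : ℝ :=
  ∑ k ∈ Finset.range (m + 1), gnDensity n m k g x

lemma gnJetDensity_nonneg (x : Heis n) : 0 ≤ gnJetDensity n m g x :=
  Finset.sum_nonneg fun _ _ => gnDensity_nonneg x

lemma IsNormalizedTestFunction.integrable_gnJetDensity (hg : IsNormalizedTestFunction g)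
    (hm : 0 < m) : Integrable (gnJetDensity n m g) :=
  integrable_finsetSum _ fun k _ => hg.integrable_gnDensity hm k

lemma exists_integral_gnJetDensity_le (n : ℕ) (hm : 0 < m) :
    ∃ C : ℝ, 0 ≤ C ∧ ∀ g : Heis n → ℝ, IsNormalizedTestFunction g → ∀ B : ℝ,
      (∀ I : Fin m → Fin (2 * n), ∫ x, |XI n (List.ofFn I) g x| ^ 2 ≤ B) →
      ∫ x, gnJetDensity n m g x ≤ C * B := by
  choose! C hC hCle using fun k (hk : k ≤ m) => exists_integral_gnDensity_le n hk
  set N := Fintype.card (Fin m → Fin (2 * n))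
  have hCsum : 0 ≤ ∑ k ∈ Finset.range (m + 1), C k :=
    Finset.sum_nonneg fun k hk => hC k (Finset.mem_range_succ_iff.1 hk)
  refine ⟨(∑ k ∈ Finset.range (m + 1), C k) * N, by positivity, fun g hg B hB => ?_⟩
  have htop : ∫ x, gnDensity n m m g x ≤ N * B := by
    have hint (I : List (Fin (2 * n))) : Integrable fun x => |XI n I g x| ^ 2 := by
      simpa using hg.integrable_abs_XI_rpow I two_pos
    rw [funext (gnDensity_self hm.ne'), integral_finsetSum _ fun I _ => hint _, ← nsmul_eq_mul]
    exact Finset.sum_le_card_nsmul _ _ _ fun I _ => hB I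
  calc ∫ x, gnJetDensity n m g x
      = ∑ k ∈ Finset.range (m + 1), ∫ x, gnDensity n m k g x :=
        integral_finsetSum _ fun k _ => hg.integrable_gnDensity hm k
    _ ≤ ∑ k ∈ Finset.range (m + 1), C k * ∫ x, gnDensity n m m g x :=
        Finset.sum_le_sum fun k hk => hCle k (Finset.mem_range_succ_iff.1 hk) g hg
    _ = (∑ k ∈ Finset.range (m + 1), C k) * ∫ x, gnDensity n m m g x := by rw [Finset.sum_mul]
    _ ≤ (∑ k ∈ Finset.range (m + 1), C k) * (N * B) := by gcongr
    _ = (∑ k ∈ Finset.range (m + 1), C k) * N * B := by ring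

lemma abs_XI_le_gnJetDensity_rpow_pow {x : Heis n} (hgx : |g x| ≤ 1) (hm : 0 < m)
    {I : List (Fin (2 * n))} (hI : I.length ≤ m) :
    |XI n I g x| ≤ (gnJetDensity n m g x ^ ((2 * m : ℕ) : ℝ)⁻¹) ^ I.length := by
  have hle : gnDensity n m I.length g x ≤ gnJetDensity n m g x :=
    Finset.single_le_sum (f := fun k => gnDensity n m k g x) (fun k _ => gnDensity_nonneg x)
      (Finset.mem_range_succ_iff.2 hI)
  calc |XI n I g x| ≤ gnDensity n m I.length g x ^ (I.length / (2 * m) : ℝ) :=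
        abs_XI_le_gnDensity_rpow hgx hm I
    _ ≤ gnJetDensity n m g x ^ (I.length / (2 * m) : ℝ) :=
        Real.rpow_le_rpow (gnDensity_nonneg x) hle (by positivity)
    _ = (gnJetDensity n m g x ^ ((2 * m : ℕ) : ℝ)⁻¹) ^ I.length := by
        rw [← Real.rpow_natCast, ← Real.rpow_mul (gnJetDensity_nonneg x)]
        congr 1
        push_cast
        ring

lemma mul_pow_sq_le_pow_mul_one_add_pow {P ρ : ℝ} {l : ℕ} (hP : 1 ≤ P) (hρ : 0 ≤ ρ) (hl : l ≤ s) :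
    ((P * ρ) ^ l) ^ 2 ≤ P ^ (2 * s) * (1 + ρ ^ (2 * s)) := by
  have hρl : ρ ^ (2 * l) ≤ 1 + ρ ^ (2 * s) := by
    rcases le_total ρ 1 with h | h
    · exact (pow_le_one₀ hρ h).trans (le_add_of_nonneg_right (by positivity))
    · exact (pow_le_pow_right₀ h (by omega)).trans (le_add_of_nonneg_left zero_le_one)
  calc ((P * ρ) ^ l) ^ 2 = P ^ (2 * l) * ρ ^ (2 * l) := by ring
    _ ≤ P ^ (2 * s) * (1 + ρ ^ (2 * s)) := by gcongr

/-- If `f = P • g` near `x`, then the horizontal derivatives of `f` of order `l ≥ 1` at `x` are at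
most `P * ρ ^ l ≤ (P * ρ) ^ l` with `ρ = (gnJetDensity n s g x) ^ (1 / 2s)`. -/
lemma exists_norm_XI_inv_sq_le (hs : 0 < s) {c : ℝ} (hc : 0 < c) :
    ∃ C : ℝ, 0 ≤ C ∧ ∀ {n : ℕ} {f g : Heis n → ℝ} {x : Heis n} {P : ℝ}, 1 ≤ P → |g x| ≤ 1 →
      c ≤ f x → ContDiffAt ℝ ∞ f x → f =ᶠ[𝓝 x] P • g →
      ∀ I : List (Fin (2 * n)), I.length ≤ s →
        ‖XI n I f⁻¹ x‖ ^ 2 ≤ C * P ^ (2 * s) * (1 + gnJetDensity n s g x) := by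
  obtain ⟨C, hC⟩ := HorizontalJetBound.exists_inv s hc
  refine ⟨C ^ 2, by positivity, fun {n f g x P} hP hgx hfx hf hfg I hI => ?_⟩
  have hS : 0 ≤ gnJetDensity n s g x := gnJetDensity_nonneg x
  set ρ := gnJetDensity n s g x ^ ((2 * s : ℕ) : ℝ)⁻¹
  have hρ : 0 ≤ ρ := Real.rpow_nonneg hS _
  have hρS : ρ ^ (2 * s) = gnJetDensity n s g x := Real.rpow_inv_natCast_pow hS (by omega)
  have hjet : ∀ J : List (Fin (2 * n)), J ≠ [] → J.length ≤ s →
      ‖XI n J f x‖ ≤ (P * ρ) ^ J.length := fun J hJ hJs => by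
    have hXg := abs_XI_le_gnJetDensity_rpow_pow hgx hs hJs
    rw [(XI_congr J hfg).self_of_nhds, XI_const_smul, Pi.smul_apply, norm_smul, Real.norm_eq_abs,
      Real.norm_eq_abs, abs_of_nonneg (zero_le_one.trans hP), mul_pow]
    gcongr
    exact le_self_pow₀ hP (List.length_eq_zero_iff.not.2 hJ)
  calc ‖XI n I f⁻¹ x‖ ^ 2 ≤ (C * (P * ρ) ^ I.length) ^ 2 := by
        gcongr
        exact hC (by positivity) hf hfx hjet I hI
    _ = C ^ 2 * ((P * ρ) ^ I.length) ^ 2 := by ring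
    _ ≤ C ^ 2 * (P ^ (2 * s) * (1 + ρ ^ (2 * s))) := by
        gcongr
        exact mul_pow_sq_le_pow_mul_one_add_pow hP hρ hI
    _ = C ^ 2 * P ^ (2 * s) * (1 + gnJetDensity n s g x) := by rw [hρS, mul_assoc]

lemma fsNorm_le {f : Heis n → E} {A : ℝ} (hA : ∀ I : List (Fin (2 * n)), I.length ≤ s →
      ∫ x in D, ‖XI n I f x‖ ^ 2 ≤ A) :
    fsNorm n D s f ≤
      √((∑ t ∈ Finset.range (s + 1), Fintype.card (Fin t → Fin (2 * n)) : ℕ) * A) := by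
  refine Real.sqrt_le_sqrt ?_
  rw [fsNormSq, Nat.cast_sum, Finset.sum_mul]
  refine Finset.sum_le_sum fun t ht => ?_
  rw [← nsmul_eq_mul]
  exact Finset.sum_le_card_nsmul _ _ _ fun I _ =>
    hA _ (by simpa using Finset.mem_range_succ_iff.1 ht)

lemma exists_integral_norm_XI_inv_sq_le (hn : 1 ≤ n) (hs : 2 * n + 2 ≤ s) {D' : Set (Heis n)}
    (hD : IsOpen D) (hDb : IsBounded D) (hsub : closure D' ⊆ D) {c : ℝ} (hc : 0 < c) :
    ∃ C : ℝ, 0 ≤ C ∧ ∀ f : Heis n → ℝ, ContDiffOn ℝ ∞ f (closure D) →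
      (∀ x ∈ closure D', c ≤ f x) → ∀ I : List (Fin (2 * n)), I.length ≤ s →
        ∫ x in D', ‖XI n I f⁻¹ x‖ ^ 2 ≤ C * (1 + fsNorm n D s f) ^ (2 * s) := by
  have hs0 : 0 < s := by omega
  have hK : IsCompact (closure D') := (hDb.subset (subset_closure.trans hsub)).isCompact_closure
  have hD' : volume D' ≠ ⊤ := ((measure_mono subset_closure).trans_lt hK.measure_lt_top).ne
  obtain ⟨A, hA, hloc⟩ := exists_normalized_localization hn hs hD hDb hK hsub
  obtain ⟨B, hB, hinv⟩ := exists_norm_XI_inv_sq_le hs0 hc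
  obtain ⟨G, hG, hGN⟩ := exists_integral_gnJetDensity_le n hs0
  refine ⟨B * A ^ (2 * s) * (volume.real D' + G * A), by positivity, fun f hf hfc I hI => ?_⟩
  obtain ⟨g, hg, hfg, hgA⟩ := hloc f hf
  have hN : 0 ≤ fsNorm n D s f := Real.sqrt_nonneg _
  set P := A * (1 + fsNorm n D s f)
  have hP : 1 ≤ P := one_le_mul_of_one_le_of_one_le hA (by linarith)
  have hS : Integrable (gnJetDensity n s g) := hg.integrable_gnJetDensity hs0
  have hone : IntegrableOn (fun _ => (1 : ℝ)) D' := integrableOn_const hD'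
  calc ∫ x in D', ‖XI n I f⁻¹ x‖ ^ 2
      ≤ ∫ x in D', B * P ^ (2 * s) * (1 + gnJetDensity n s g x) := by
        refine integral_mono_of_nonneg (.of_forall fun x => by positivity)
          ((hone.fun_add hS.integrableOn).const_mul _) ?_
        filter_upwards [ae_restrict_of_ae_restrict_of_subset subset_closure
          (ae_restrict_mem isClosed_closure.measurableSet)] with x hx
        exact hinv hP (hg.abs_le_one x) (hfc x hx)
          (hf.contDiffAt (mem_of_superset (hD.mem_nhds (hsub hx)) subset_closure)) (hfg x hx) I hI
    _ = B * P ^ (2 * s) * (volume.real D' + ∫ x in D', gnJetDensity n s g x) := by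
        rw [integral_const_mul, integral_add hone hS.integrableOn, setIntegral_const, smul_eq_mul,
          mul_one]
    _ ≤ B * P ^ (2 * s) * (volume.real D' + G * A) := by
        gcongr
        exact (setIntegral_le_integral hS (.of_forall gnJetDensity_nonneg)).trans
          (hGN g hg A fun J => hgA _ (by simp))
    _ = B * A ^ (2 * s) * (volume.real D' + G * A) * (1 + fsNorm n D s f) ^ (2 * s) := by
        rw [mul_pow]
        ring

end Reciprocal

theorem statement4_general (n s : ℕ) (hn : 1 ≤ n) (hs : 2 * n + 2 ≤ s) (D D' : Set (Heis n))
    (hD : IsOpen D) (hDb : IsBounded D) (hsub : closure D' ⊆ D) (C₀ : ℝ) (hC₀ : 0 < C₀) :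
    ∃ C > (0 : ℝ), ∀ f : Heis n → ℝ, ContDiffOn ℝ ∞ f (closure D) →
      (∀ x ∈ closure D', 1 / C₀ ≤ f x) →
        fsNorm n D' s (fun x => (f x)⁻¹) ≤ C * (1 + fsNorm n D s f) ^ s := by
  obtain ⟨A, hA, hle⟩ := exists_integral_norm_XI_inv_sq_le hn hs hD hDb hsub (one_div_pos.2 hC₀)
  set N : ℕ := ∑ t ∈ Finset.range (s + 1), Fintype.card (Fin t → Fin (2 * n))
  refine ⟨√(N * A) + 1, by positivity, fun f hf hfc => ?_⟩
  have hF : 0 ≤ 1 + fsNorm n D s f := add_nonneg zero_le_one (Real.sqrt_nonneg _)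
  calc fsNorm n D' s f⁻¹ ≤ √(N * (A * (1 + fsNorm n D s f) ^ (2 * s))) := fsNorm_le (hle f hf hfc)
    _ = √(N * A) * (1 + fsNorm n D s f) ^ s := by
        rw [← mul_assoc, mul_comm 2 s, pow_mul, Real.sqrt_mul (by positivity),
          Real.sqrt_sq (by positivity)]
    _ ≤ (√(N * A) + 1) * (1 + fsNorm n D s f) ^ s := by
        gcongr
        exact le_add_of_nonneg_right zero_le_one

/-- `‖1/f‖_{D',s} ≤ C (1 + ‖f‖_{D,s})^s` when `f ≥ 1/C₀` on `cl D'`. -/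
theorem statement4 (n s : ℕ) (hn : 1 ≤ n) (hs : 2*n+3 ≤ s)
    (D D' : Set (Fin (2*n+1) → ℝ)) (hD : IsOpen D) (hDb : IsBounded D)
    (hD' : IsOpen D') (hD'b : IsBounded D') (hsub : closure D' ⊆ D)
    (C₀ : ℝ) (hC₀ : 0 < C₀) :
    ∃ C > (0:ℝ), ∀ f : (Fin (2*n+1) → ℝ) → ℝ,
      ContDiffOn ℝ (⊤:ℕ∞) f (closure D) →
      (∀ x ∈ closure D', 1/C₀ ≤ f x) →
      fsNorm n D' s (fun x => (f x)⁻¹) ≤ C * (1 + fsNorm n D s f)^s := by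
  exact statement4_general n s hn (by omega) D D' hD hDb hsub C₀ hC₀

end
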